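/- arXiv:1706.09675 — 2 statements merged into one kernel-verified Lean document; each statement's English description precedes it below -/
import Mathlib

section
/- Let H be a hypergraph containing a good leaf and let I = I(H) be its edge ideal in R = k[x_1,…,x_n]. Then: (i) the functions t ↦ depth R/I^t and t ↦ depth R/\overline{I^t} are non-increasing for t ≥ 1; (ii) the functions t ↦ reg R/I^t and t ↦ reg R/\overline{I^t} are non-decreasing for t ≥ 1. -/
open MvPolynomial

/-- The depth of the `R`-module `M` with respect to the ideal `J`: the supremum of
lengths of `M`-regular sequences consisting of elements of `J`. -/
noncomputable def idealDepth {R : Type*} [CommRing R] (J : Ideal R)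
    (M : Type*) [AddCommGroup M] [Module R M] : ℕ :=
  sSup {d : ℕ | ∃ rs : List R, rs.length = d ∧ (∀ r ∈ rs, r ∈ J) ∧
    RingTheory.Sequence.IsRegular M rs}

/-- The irrelevant maximal homogeneous ideal `(x₁, …, xₙ)` of the polynomial ring. -/
noncomputable def mxIdeal (k : Type*) [Field k] (n : ℕ) : Ideal (MvPolynomial (Fin n) k) :=
  Ideal.span (Set.range MvPolynomial.X)

/-- `depth R/I`, the depth of the quotient module with respect to the maximal
homogeneous ideal. -/
noncomputable def pdepth {k : Type*} [Field k] {n : ℕ}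
    (I : Ideal (MvPolynomial (Fin n) k)) : ℕ :=
  idealDepth (mxIdeal k n) (MvPolynomial (Fin n) k ⧸ I)

/-- `p` is homogeneous of degree `d ∈ ℤ` (where `0` is homogeneous of any degree). -/
def HomogOfDeg {k : Type*} [Field k] {n : ℕ} (p : MvPolynomial (Fin n) k) (d : ℤ) : Prop :=
  p = 0 ∨ ∃ m : ℕ, (m : ℤ) = d ∧ p.IsHomogeneous m

/-- A finite graded free resolution of `R/I`: free modules `Fᵢ = ⊕_j R(-D i j)` (of rank
`b i`, zero for `i > len`), differentials given by matrices `A i : Fᵢ₊₁ → Fᵢ` whose entries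
are homogeneous of the appropriate degrees, and an augmentation `F₀ → R/I` given by the
homogeneous column `v`, the whole complex being exact. -/
structure GradedFreeRes {k : Type*} [Field k] {n : ℕ}
    (I : Ideal (MvPolynomial (Fin n) k)) where
  len : ℕ
  b : ℕ → ℕ
  hb : ∀ i : ℕ, len < i → b i = 0
  D : (i : ℕ) → Fin (b i) → ℤ
  A : (i : ℕ) → Matrix (Fin (b i)) (Fin (b (i+1))) (MvPolynomial (Fin n) k)
  v : Fin (b 0) → MvPolynomial (Fin n) k
  hv : ∀ r, HomogOfDeg (v r) (D 0 r)
  hA : ∀ (i : ℕ) r c, HomogOfDeg (A i r c) (D (i+1) c - D i r)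
  haug : Function.Surjective
    (fun w : Fin (b 0) → MvPolynomial (Fin n) k => Ideal.Quotient.mk I (∑ r, w r * v r))
  hex0 : Function.Exact ((A 0).mulVec)
    (fun w : Fin (b 0) → MvPolynomial (Fin n) k => Ideal.Quotient.mk I (∑ r, w r * v r))
  hex : ∀ i : ℕ, Function.Exact ((A (i+1)).mulVec) ((A i).mulVec)

/-- The Castelnuovo–Mumford regularity `reg R/I`: the least `r` such that some finite
graded free resolution of `R/I` has all its `i`-th twists `≤ r + i`; equivalently (via the
minimal free resolution) `reg R/I = max { j - i : β_{i,j}(R/I) ≠ 0 }`. -/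
noncomputable def regQuot {k : Type*} [Field k] {n : ℕ}
    (I : Ideal (MvPolynomial (Fin n) k)) : ℤ :=
  sInf {r : ℤ | ∃ F : GradedFreeRes I, ∀ (i : ℕ) (j : Fin (F.b i)), F.D i j - (i : ℤ) ≤ r}

/-- The regularity of a (nonzero) homogeneous ideal: `reg I = reg R/I + 1`. -/
noncomputable def regIdeal {k : Type*} [Field k] {n : ℕ}
    (I : Ideal (MvPolynomial (Fin n) k)) : ℤ :=
  regQuot I + 1

/-- An ideal is homogeneous if it is generated by homogeneous polynomials. -/
def IsHomogeneousIdeal {k : Type*} [Field k] {n : ℕ}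
    (I : Ideal (MvPolynomial (Fin n) k)) : Prop :=
  ∃ T : Set (MvPolynomial (Fin n) k), (∀ p ∈ T, ∃ d : ℕ, p.IsHomogeneous d) ∧ I = Ideal.span T

/-- A monomial ideal: an ideal generated by monomials. -/
def IsMonomialIdeal {k : Type*} [Field k] {n : ℕ}
    (I : Ideal (MvPolynomial (Fin n) k)) : Prop :=
  ∃ T : Set (Fin n →₀ ℕ), I = Ideal.span ((fun m => monomial m (1 : k)) '' T)


/-- The edge ideal `I(H)` of the hypergraph on vertices `x_1, …, x_n` with edge set `E`. -/
noncomputable def edgeIdealH (k : Type*) [Field k] {n : ℕ} (E : Set (Finset (Fin n))) :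
    Ideal (MvPolynomial (Fin n) k) :=
  Ideal.span ((fun F => ∏ i ∈ F, MvPolynomial.X i) '' E)

/-- `F` is a good leaf of the hypergraph with edge set `E`: `F` is an edge and the
intersections of `F` with the other edges form a chain with respect to containment. -/
def IsGoodLeaf {n : ℕ} (E : Set (Finset (Fin n))) (F : Finset (Fin n)) : Prop :=
  F ∈ E ∧ ∀ G₁ ∈ E, ∀ G₂ ∈ E, G₁ ≠ F → G₂ ≠ F → (G₁ ∩ F ⊆ G₂ ∩ F ∨ G₂ ∩ F ⊆ G₁ ∩ F)

/-- The integral closure `\overline{J}` of an ideal `J`: generated by (in fact equal to the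
set of) all `r` satisfying an equation of integral dependence
`r^m + a₁ r^(m-1) + ⋯ + a_m = 0` with `aᵢ ∈ J^i`. -/
noncomputable def intClos {R : Type*} [CommRing R] (J : Ideal R) : Ideal R :=
  Ideal.span {r : R | ∃ m : ℕ, 0 < m ∧ ∃ a : ℕ → R,
    (∀ i : ℕ, 1 ≤ i → i ≤ m → a i ∈ J ^ i) ∧
    r ^ m + ∑ i ∈ Finset.Icc 1 m, a i * r ^ (m - i) = 0}

/-!
Let `F` be a good leaf and `I = I(H)`. Since the intersections of `F` with the other edges form a
chain, among any `t + 1` edges one contains the part of `F` met by the others; removing it from a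
product of `t + 1` edges shows `I ^ (t + 1) : x ^ F = I ^ t`. Clearing exponents gives the same for
the integral closures. It remains to see that passing from a monomial ideal `N` to `E = N : x`, for
a variable `x`, does not decrease the depth and does not increase the regularity. Write
`N = L + x E` with `L` generated by the monomials of `N` not involving `x`, so that `x` is a
nonzerodivisor modulo `L`.

For the depth, compare the sequences `0 → E/L → R/L → R/E → 0` and `0 → E/L → R/L → R/N → 0`. The
first map of the second one is `x` times that of the first one, so it vanishes on `Ext(R/m, -)`.

For the regularity, a generator of `N` has the form `A + x B` with `A ∈ L` and `B ∈ E`, the `A` and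
`B` together generate `E`, and the syzygies of these are again split by `x`, over the syzygies of
the `A + x B`. So degree bounds on the iterated syzygies of `N` carry over to `E`. They bound the
twists of a finite free resolution because monomial ideals have finite projective dimension and
graded projective modules are free.
-/

section ColonSplitting

variable {R M : Type*} [CommRing R] [AddCommGroup M] [Module R M]

/-- The submodule `N` is written as `L + x E`, where `x` is a nonzerodivisor modulo `L` and
`L ⊆ E`; then `E` is the colon `N : x`. For a monomial ideal `N` and a variable `x`, one takes
for `L` the ideal generated by the monomials of `N` not involving `x`. -/
structure IsColonSplitting (x : R) (N L E : Submodule R M) : Prop where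
  le : L ≤ E
  mem_of_smul_mem : ∀ v, x • v ∈ L → v ∈ L
  eq_sup : N = L ⊔ E.map (LinearMap.lsmul R M x)

namespace IsColonSplitting

variable {x : R} {N L E : Submodule R M}

lemma mem_iff (h : IsColonSplitting x N L E) {v : M} :
    v ∈ N ↔ ∃ l ∈ L, ∃ e ∈ E, l + x • e = v := by
  simp only [h.eq_sup, Submodule.mem_sup, Submodule.mem_map, exists_exists_and_eq_and,
    LinearMap.lsmul_apply]

lemma left_le (h : IsColonSplitting x N L E) : L ≤ N :=
  le_sup_left.trans_eq h.eq_sup.symm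

lemma smul_mem (h : IsColonSplitting x N L E) {v : M} (hv : v ∈ E) : x • v ∈ N :=
  h.mem_iff.2 ⟨0, L.zero_mem, v, hv, zero_add _⟩

lemma le_right (h : IsColonSplitting x N L E) : N ≤ E := fun v hv => by
  obtain ⟨l, hl, e, he, rfl⟩ := h.mem_iff.1 hv
  exact E.add_mem (h.le hl) (E.smul_mem x he)

end IsColonSplitting

end ColonSplitting

section Depth

open CategoryTheory Abelian RingTheory.Sequence

universe u v w

lemma subsingleton_ext_of_shortExact_smul {R : Type*} [CommRing R] {C : Type u} [Category.{v} C]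
    [Abelian C] [Linear R C] [HasExt.{w} C] {N A B P Q : C} {x : R} (hx : x • 𝟙 N = 0)
    {i : A ⟶ B} {p : B ⟶ P} {q : B ⟶ Q} {hip : i ≫ p = 0} {hiq : (x • i) ≫ q = 0}
    (hP : (ShortComplex.mk i p hip).ShortExact) (hQ : (ShortComplex.mk (x • i) q hiq).ShortExact)
    {d : ℕ} (hN : ∀ j < d, Subsingleton (Ext N Q j)) : ∀ j < d, Subsingleton (Ext N P j) := by
  have comp_smul_eq_zero (j : ℕ) (e : Ext N A j) : e.comp (Ext.mk₀ (x • i)) (add_zero j) = 0 := by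
    have hxe : x • e = 0 := by
      rw [← Ext.mk₀_id_comp e, ← Ext.smul_comp, ← Ext.mk₀_smul, hx, Ext.mk₀_zero, Ext.zero_comp]
    rw [Ext.mk₀_smul, Ext.comp_smul, ← Ext.smul_comp, hxe, Ext.zero_comp]
  have middle (j : ℕ) (hj : j < d) (e : Ext N B j) : e = 0 := by
    have := hN j hj
    obtain ⟨a, rfl⟩ := Ext.covariant_sequence_exact₂ N hQ e (Subsingleton.elim _ _)
    exact comp_smul_eq_zero j a
  have left (j : ℕ) (hj : j < d) (e : Ext N A (j + 1)) : e = 0 := by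
    have := hN j hj
    obtain ⟨c, rfl⟩ := Ext.covariant_sequence_exact₁ N hQ e (comp_smul_eq_zero _ e) rfl
    rw [Subsingleton.elim c 0, Ext.zero_comp]
  intro j hj
  refine subsingleton_of_forall_eq 0 fun e => ?_
  obtain ⟨b, rfl⟩ := Ext.covariant_sequence_exact₃ N hP e rfl (left j hj _)
  rw [middle j hj b, Ext.zero_comp]

variable {R : Type u} [CommRing R]

namespace IsColonSplitting

variable {M : Type u} [AddCommGroup M] [Module R M] {x : R} {N L E : Submodule R M}

lemma exact_factor (h : IsColonSplitting x N L E) :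
    Function.Exact (E.map L.mkQ).subtype (Submodule.factor h.le) := by
  rw [LinearMap.exact_iff, Submodule.range_subtype]
  exact Submodule.ker_mapQ _ _ _ _

lemma exact_smul_factor (h : IsColonSplitting x N L E) :
    Function.Exact (x • (E.map L.mkQ).subtype) (Submodule.factor h.left_le) := by
  have ker_factor : LinearMap.ker (Submodule.factor h.left_le) = N.map L.mkQ :=
    Submodule.ker_mapQ _ _ _ _
  rw [LinearMap.exact_iff, ker_factor]
  ext v
  constructor
  · rintro ⟨_, hv, rfl⟩
    obtain ⟨l, hl, e, he, rfl⟩ := h.mem_iff.1 hv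
    exact ⟨⟨_, e, he, rfl⟩, by simp [(Submodule.Quotient.mk_eq_zero L).2 hl]⟩
  · rintro ⟨⟨_, e, he, rfl⟩, rfl⟩
    exact ⟨x • e, h.smul_mem he, rfl⟩

lemma injective_smul (h : IsColonSplitting x N L E) :
    Function.Injective (x • (E.map L.mkQ).subtype) := by
  rw [injective_iff_map_eq_zero]
  rintro ⟨_, e, he, rfl⟩ hxe
  exact Subtype.ext ((Submodule.Quotient.mk_eq_zero L).2
    (h.mem_of_smul_mem e ((Submodule.Quotient.mk_eq_zero L).1 hxe)))

lemma subsingleton_ext (h : IsColonSplitting x N L E) {K : ModuleCat.{u} R} (hx : x • 𝟙 K = 0)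
    {d : ℕ} (hN : ∀ j < d, Subsingleton (Ext K (ModuleCat.of R (M ⧸ N)) j)) :
    ∀ j < d, Subsingleton (Ext K (ModuleCat.of R (M ⧸ E)) j) :=
  subsingleton_ext_of_shortExact_smul hx (x := x) (i := ModuleCat.ofHom (E.map L.mkQ).subtype)
    (p := ModuleCat.ofHom (Submodule.factor h.le))
    (q := ModuleCat.ofHom (Submodule.factor h.left_le))
    (ModuleCat.shortComplex_shortExact
      (ModuleCat.shortComplexOfCompEqZero _ _ h.exact_factor.linearMap_comp_eq_zero)
      h.exact_factor (Submodule.subtype_injective _) (Submodule.factor_surjective h.le))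
    (ModuleCat.shortComplex_shortExact
      (ModuleCat.shortComplexOfCompEqZero _ _ h.exact_smul_factor.linearMap_comp_eq_zero)
      h.exact_smul_factor h.injective_smul (Submodule.factor_surjective h.left_le)) hN

lemma exists_isRegular [IsNoetherianRing R] [Module.Finite R M] (h : IsColonSplitting x N L E)
    {m : Ideal R} (hx : x ∈ m) (hE : m • ⊤ ⊔ E ≠ ⊤) {d : ℕ}
    (hN : ∃ rs : List R, rs.length = d ∧ (∀ r ∈ rs, r ∈ m) ∧ IsRegular (M ⧸ N) rs) :
    ∃ rs : List R, rs.length = d ∧ (∀ r ∈ rs, r ∈ m) ∧ IsRegular (M ⧸ E) rs := by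
  have smul_top_lt {K : Submodule R M} (hK : K ≤ E) : m • (⊤ : Submodule R (M ⧸ K)) < ⊤ := by
    refine lt_top_iff_ne_top.2 fun htop => hE (top_unique ?_)
    have hcomap := Submodule.comap_smul_top_of_surjective m K.mkQ K.mkQ_surjective
    rw [htop, Submodule.comap_top, Submodule.ker_mkQ] at hcomap
    exact hcomap.le.trans (sup_le_sup_left hK _)
  have regular_iff_ext {K : Submodule R M} (hK : K ≤ E) :=
    (ModuleCat.exists_isRegular_tfae m d (ModuleCat.of R (M ⧸ K)) (smul_top_lt hK)).out 3 1
  refine (regular_iff_ext le_rfl).2 (h.subsingleton_ext ?_ ((regular_iff_ext h.le_right).1 hN))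
  rw [← ModuleCat.lsmul_eq_smul_id, Module.mem_annihilator_iff_lsmul_eq_zero.1]
  · rfl
  · change x ∈ Module.annihilator R (Shrink.{u} (R ⧸ m))
    rwa [(Shrink.linearEquiv R (R ⧸ m)).annihilator_eq, Ideal.annihilator_quotient]

end IsColonSplitting

lemma length_le_supportDim_of_isRegular {rs : List R} {M : Type u}
    [AddCommGroup M] [Module R M] [Module.Finite R M] (h : IsRegular M rs) :
    (rs.length : WithBot ℕ∞) ≤ Module.supportDim R M := by
  induction rs generalizing M with
  | nil =>
    have := h.nontrivial
    obtain ⟨d, hd⟩ := WithBot.ne_bot_iff_exists.1 (Module.supportDim_ne_bot_of_nontrivial R M)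
    rw [← hd]
    exact WithBot.coe_le_coe.2 zero_le
  | cons r rs ih =>
    rw [isRegular_cons_iff] at h
    calc ((r :: rs).length : WithBot ℕ∞) = rs.length + 1 := by push_cast [List.length_cons]; rfl
      _ ≤ Module.supportDim R (QuotSMulTop r M) + 1 := by gcongr; exact ih h.2
      _ ≤ Module.supportDim R M :=
        Module.supportDim_quotSMulTop_succ_le_of_notMem_minimalPrimes
          fun _ => h.1.notMem_of_mem_minimalPrimes

lemma bddAbove_length_isRegular [IsNoetherianRing R] (hR : ringKrullDim R ≠ ⊤)
    (M : Type u) [AddCommGroup M] [Module R M] [Module.Finite R M] (m : Ideal R) :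
    BddAbove {d : ℕ | ∃ rs : List R, rs.length = d ∧ (∀ r ∈ rs, r ∈ m) ∧ IsRegular M rs} := by
  obtain ⟨n, hn⟩ := not_forall.1 (mt ENat.WithBot.eq_top_iff_forall_ge.2 hR)
  refine ⟨n, ?_⟩
  rintro _ ⟨rs, rfl, -, hrs⟩
  exact_mod_cast (length_le_supportDim_of_isRegular hrs).trans
    ((Module.supportDim_le_ringKrullDim R M).trans (le_of_not_ge hn))

lemma IsColonSplitting.idealDepth_le [IsNoetherianRing R] (hR : ringKrullDim R ≠ ⊤)
    {M : Type u} [AddCommGroup M] [Module R M] [Module.Finite R M] {x : R} {N L E : Submodule R M}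
    (h : IsColonSplitting x N L E) {m : Ideal R} (hx : x ∈ m) (hE : m • ⊤ ⊔ E ≠ ⊤) :
    idealDepth m (M ⧸ N) ≤ idealDepth m (M ⧸ E) :=
  csSup_le' fun _ hd =>
    le_csSup (bddAbove_length_isRegular hR (M ⧸ E) m) (h.exists_isRegular hx hE hd)

end Depth

section IrrelevantIdeal

variable {k : Type*} [Field k] {n : ℕ}

lemma mem_mxIdeal_iff {p : MvPolynomial (Fin n) k} : p ∈ mxIdeal k n ↔ coeff 0 p = 0 := by
  rw [mxIdeal, ← pow_one (Ideal.span _), mem_pow_idealOfVars_iff']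
  simp [Finsupp.degree_eq_zero_iff]

lemma mxIdeal_ne_top : mxIdeal k n ≠ ⊤ := by
  rw [Ideal.ne_top_iff_one, mem_mxIdeal_iff, coeff_zero_one]
  exact one_ne_zero

lemma IsColonSplitting.pdepth_le {x : MvPolynomial (Fin n) k}
    {N L E : Ideal (MvPolynomial (Fin n) k)} (h : IsColonSplitting x N L E)
    (hx : x ∈ mxIdeal k n) (hE : E ≤ mxIdeal k n) : pdepth N ≤ pdepth E := by
  refine h.idealDepth_le ?_ hx ?_
  · rw [MvPolynomial.ringKrullDim_of_isNoetherianRing, ringKrullDim_eq_zero_of_field,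
      zero_add, Nat.card_fin]
    exact (WithBot.coe_lt_coe.2 (WithTop.natCast_lt_top n)).ne
  · rw [smul_eq_mul, Ideal.mul_top, sup_eq_left.2 hE]
    exact mxIdeal_ne_top

end IrrelevantIdeal

section MonomialIdeal

section General

open scoped Pointwise

variable {σ R : Type*} [CommSemiring R]

lemma mem_of_forall_monomial_mem {I : Ideal (MvPolynomial σ R)} {p : MvPolynomial σ R}
    (h : ∀ e ∈ p.support, monomial e 1 ∈ I) : p ∈ I := by
  rw [p.as_sum]
  refine I.sum_mem fun e he => ?_
  rw [← mul_one (coeff e p), ← C_mul_monomial]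
  exact I.mul_mem_left _ (h e he)

lemma monomial_mem_of_le {I : Ideal (MvPolynomial σ R)} {d e : σ →₀ ℕ} (hde : d ≤ e)
    (hd : monomial d 1 ∈ I) : monomial e 1 ∈ I := by
  rw [← tsub_add_cancel_of_le hde, ← one_mul (1 : R), ← monomial_mul]
  exact I.mul_mem_left _ hd

lemma monomial_mem_span_monomial_iff [Nontrivial R] {T : Set (σ →₀ ℕ)} {e : σ →₀ ℕ} :
    monomial e (1 : R) ∈ Ideal.span ((fun m => monomial m (1 : R)) '' T) ↔ ∃ d ∈ T, d ≤ e := by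
  classical simp [mem_ideal_span_monomial_image, support_monomial]

lemma span_monomial_mul (S T : Set (σ →₀ ℕ)) :
    Ideal.span ((fun m => monomial m (1 : R)) '' S) * Ideal.span ((fun m => monomial m 1) '' T) =
      Ideal.span ((fun m => monomial m 1) '' (S + T)) := by
  rw [Ideal.span_mul_span', ← Set.image2_mul, ← Set.image2_add, Set.image_image2,
    Set.image2_image_left, Set.image2_image_right]
  simp only [monomial_mul, mul_one]

lemma span_monomial_pow (T : Set (σ →₀ ℕ)) (t : ℕ) :
    Ideal.span ((fun m => monomial m (1 : R)) '' T) ^ t =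
      Ideal.span ((fun m => monomial m 1) '' (t • T)) := by
  induction t with
  | zero =>
    rw [zero_nsmul, pow_zero, Ideal.one_eq_top, ← Set.singleton_zero, Set.image_singleton]
    exact Ideal.span_singleton_one.symm
  | succ t ih => rw [pow_succ, ih, span_monomial_mul, succ_nsmul]

end General

variable {k : Type*} [Field k] {n : ℕ} {I J : Ideal (MvPolynomial (Fin n) k)}

lemma isMonomialIdeal_iff :
    IsMonomialIdeal I ↔ ∀ p ∈ I, ∀ e ∈ p.support, monomial e (1 : k) ∈ I := by
  constructor
  · rintro ⟨T, rfl⟩ p hp e he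
    exact monomial_mem_span_monomial_iff.2 (mem_ideal_span_monomial_image.1 hp e he)
  · intro h
    refine ⟨{e | monomial e (1 : k) ∈ I}, le_antisymm (fun p hp => ?_) ?_⟩
    · exact mem_of_forall_monomial_mem fun e he => Ideal.subset_span ⟨e, h p hp e he, rfl⟩
    · rw [Ideal.span_le]
      rintro _ ⟨e, he, rfl⟩
      exact he

namespace IsMonomialIdeal

lemma monomial_mem (hI : IsMonomialIdeal I) {p : MvPolynomial (Fin n) k} (hp : p ∈ I)
    {e : Fin n →₀ ℕ} (he : e ∈ p.support) : monomial e (1 : k) ∈ I :=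
  isMonomialIdeal_iff.1 hI p hp e he

lemma mem_iff (hI : IsMonomialIdeal I) {p : MvPolynomial (Fin n) k} :
    p ∈ I ↔ ∀ e ∈ p.support, monomial e (1 : k) ∈ I :=
  ⟨fun hp _ => hI.monomial_mem hp, mem_of_forall_monomial_mem⟩

lemma ext (hI : IsMonomialIdeal I) (hJ : IsMonomialIdeal J)
    (h : ∀ e, monomial e (1 : k) ∈ I ↔ monomial e (1 : k) ∈ J) : I = J :=
  Ideal.ext fun p => by rw [hI.mem_iff, hJ.mem_iff, forall₂_congr fun e _ => h e]

lemma le_mxIdeal (hI : IsMonomialIdeal I) (htop : I ≠ ⊤) : I ≤ mxIdeal k n := by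
  intro p hp
  rw [mem_mxIdeal_iff]
  by_contra h0
  exact htop ((Ideal.eq_top_iff_one I).2 (hI.monomial_mem hp (mem_support_iff.2 h0)))

lemma pow (hI : IsMonomialIdeal I) (t : ℕ) : IsMonomialIdeal (I ^ t) := by
  obtain ⟨T, rfl⟩ := hI
  exact ⟨_, span_monomial_pow T t⟩

end IsMonomialIdeal

end MonomialIdeal

section GoodLeaf

open scoped Pointwise

/-- The exponent vector of the squarefree monomial `∏ i ∈ F, X i`. -/
noncomputable def edgeExponent {σ : Type*} (F : Finset σ) : σ →₀ ℕ :=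
  ∑ i ∈ F, Finsupp.single i 1

lemma edgeExponent_apply {σ : Type*} [DecidableEq σ] (F : Finset σ) (i : σ) :
    edgeExponent F i = if i ∈ F then 1 else 0 := by
  simp [edgeExponent, Finsupp.single_apply]

variable {k : Type*} [Field k] {n : ℕ} {E : Set (Finset (Fin n))}

lemma edgeIdealH_eq_span_monomial :
    edgeIdealH k E = Ideal.span ((fun m => monomial m 1) '' (edgeExponent '' E)) := by
  simp only [edgeIdealH, Set.image_image, edgeExponent, monomial_sum_one, X]

lemma isMonomialIdeal_edgeIdealH : IsMonomialIdeal (edgeIdealH k E) :=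
  ⟨_, edgeIdealH_eq_span_monomial⟩

lemma monomial_mem_edgeIdealH_pow_iff {t : ℕ} {e : Fin n →₀ ℕ} :
    monomial e (1 : k) ∈ edgeIdealH k E ^ t ↔
      ∃ G : Fin t → Finset (Fin n), (∀ j, G j ∈ E) ∧ ∑ j, edgeExponent (G j) ≤ e := by
  simp only [edgeIdealH_eq_span_monomial, span_monomial_pow, monomial_mem_span_monomial_iff,
    Set.mem_nsmul, List.sum_ofFn, exists_exists_eq_and]
  constructor
  · rintro ⟨f, hf⟩
    choose G hG hfG using fun j => (f j).2
    exact ⟨G, hG, by simpa only [hfG] using hf⟩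
  · rintro ⟨G, hG, he⟩
    exact ⟨fun j => ⟨_, G j, hG j, rfl⟩, he⟩

namespace IsGoodLeaf

variable {F : Finset (Fin n)}

lemma exists_forall_inter_subset (hF : IsGoodLeaf E F) {ι : Type*} [Finite ι] [Nonempty ι]
    {G : ι → Finset (Fin n)} (hG : ∀ i, G i ∈ E) : ∃ j, ∀ i, G i ∩ F ⊆ G j := by
  obtain ⟨j, hj⟩ := Finite.exists_max fun i => (G i ∩ F).card
  refine ⟨j, fun i => ?_⟩
  have comparable : G i ∩ F ⊆ G j ∩ F ∨ G j ∩ F ⊆ G i ∩ F := by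
    by_cases hi : G i = F
    · exact .inr (by simp [hi])
    by_cases hj : G j = F
    · exact .inl (by simp [hj])
    exact hF.2 _ (hG i) _ (hG j) hi hj
  refine Finset.Subset.trans ?_ (Finset.inter_subset_left (s₂ := F))
  exact comparable.elim id fun h => (Finset.eq_of_subset_of_card_le h (hj i)).ge

lemma monomial_mem_pow_of_add (hF : IsGoodLeaf E F) {t : ℕ} {e : Fin n →₀ ℕ}
    (h : monomial (e + edgeExponent F) (1 : k) ∈ edgeIdealH k E ^ (t + 1)) :
    monomial e (1 : k) ∈ edgeIdealH k E ^ t := by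
  rw [monomial_mem_edgeIdealH_pow_iff] at h ⊢
  obtain ⟨G, hG, hle⟩ := h
  obtain ⟨j, hj⟩ := hF.exists_forall_inter_subset hG
  refine ⟨fun i => G (j.succAbove i), fun i => hG _, fun v => ?_⟩
  change (∑ i, edgeExponent (G (j.succAbove i))) v ≤ e v
  have hv := hle v
  rw [Fin.sum_univ_succAbove _ j, Finsupp.add_apply, Finsupp.add_apply, edgeExponent_apply,
    edgeExponent_apply] at hv
  by_cases hvF : v ∈ F
  · by_cases hvG : v ∈ G j
    · simp only [hvF, hvG, if_true] at hv
      omega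
    · have others_avoid (i : Fin t) : edgeExponent (G (j.succAbove i)) v = 0 := by
        rw [edgeExponent_apply, if_neg]
        exact fun hvi => hvG (hj _ (Finset.mem_inter.2 ⟨hvi, hvF⟩))
      simp [others_avoid]
  · simp only [hvF, if_false] at hv
    omega

lemma monomial_add_nsmul_mem_pow_iff (hF : IsGoodLeaf E F) {t j : ℕ} {e : Fin n →₀ ℕ} :
    monomial (e + j • edgeExponent F) (1 : k) ∈ edgeIdealH k E ^ (t + j) ↔
      monomial e (1 : k) ∈ edgeIdealH k E ^ t := by
  have edge_mem : monomial (edgeExponent F) (1 : k) ∈ edgeIdealH k E := by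
    rw [edgeIdealH_eq_span_monomial]
    exact Ideal.subset_span ⟨_, ⟨F, hF.1, rfl⟩, rfl⟩
  induction j with
  | zero => simp
  | succ j ih =>
    refine Iff.trans ?_ ih
    rw [← add_assoc, succ_nsmul, ← add_assoc]
    refine ⟨hF.monomial_mem_pow_of_add, fun h => ?_⟩
    rw [← one_mul (1 : k), ← monomial_mul, pow_succ]
    exact Ideal.mul_mem_mul h edge_mem

end IsGoodLeaf

end GoodLeaf

section IntegralClosure

lemma isIntegral_of_pow_add_sum_eq_zero {A B : Type*} [CommRing A] [CommRing B] [Algebra A B]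
    {m : ℕ} {z : B} {b : ℕ → B} (hb : ∀ i, 1 ≤ i → i ≤ m → ∃ a, algebraMap A B a = b i)
    (hz : z ^ m + ∑ i ∈ Finset.Icc 1 m, b i * z ^ (m - i) = 0) : IsIntegral A z := by
  choose! a ha using hb
  refine ⟨Polynomial.X ^ m + ∑ i ∈ Finset.Icc 1 m, Polynomial.C (a i) * Polynomial.X ^ (m - i),
    Polynomial.monic_X_pow_add ?_, ?_⟩
  · refine (Polynomial.degree_sum_le _ _).trans_lt ((Finset.sup_lt_iff (WithBot.bot_lt_coe m)).2 ?_)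
    intro i hi
    refine (Polynomial.degree_C_mul_X_pow_le _ _).trans_lt (Nat.cast_lt.2 ?_)
    have := Finset.mem_Icc.1 hi
    omega
  · simp only [Polynomial.eval₂_add, Polynomial.eval₂_finsetSum, Polynomial.eval₂_mul,
      Polynomial.eval₂_C, Polynomial.eval₂_X_pow]
    rw [← hz]
    congr 1
    refine Finset.sum_congr rfl fun i hi => ?_
    rw [ha i (Finset.mem_Icc.1 hi).1 (Finset.mem_Icc.1 hi).2]

lemma map_mul_pow_add_sum_eq_zero {A B : Type*} [CommRing A] [CommRing B] (f : A →+* B) (t : B)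
    {m : ℕ} {r : A} {a : ℕ → A} (hr : r ^ m + ∑ i ∈ Finset.Icc 1 m, a i * r ^ (m - i) = 0) :
    (f r * t) ^ m + ∑ i ∈ Finset.Icc 1 m, f (a i) * t ^ i * (f r * t) ^ (m - i) = 0 := by
  rw [← zero_mul (t ^ m), ← map_zero f, ← hr, map_add, map_sum, add_mul, Finset.sum_mul, mul_pow,
    map_pow]
  congr 1
  refine Finset.sum_congr rfl fun i hi => ?_
  rw [map_mul, map_pow, mul_pow, mul_mul_mul_comm, ← pow_add,
    Nat.add_sub_cancel' (Finset.mem_Icc.1 hi).2]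

section Coaction

variable (σ R : Type*) [CommRing R]

/-- The torus coaction `x_i ↦ x_i y_i` on polynomials in the `x_i`. Its `y`-coefficients are the
monomial constituents of a polynomial. The coefficients are enlarged by one more variable,
which is used for the Rees algebra. -/
noncomputable def torusCoaction :
    MvPolynomial σ R →ₐ[R] MvPolynomial σ (Polynomial (MvPolynomial σ R)) :=
  aeval fun i => C (Polynomial.C (X i)) * X i

variable {σ R}

lemma torusCoaction_monomial (e : σ →₀ ℕ) (c : R) :
    torusCoaction σ R (monomial e c) = monomial e (Polynomial.C (monomial e c)) := by
  have hc : algebraMap R (MvPolynomial σ (Polynomial (MvPolynomial σ R))) c =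
    C (Polynomial.C (C c)) := rfl
  rw [torusCoaction, aeval_monomial, hc, monomial_eq (a := c),
    monomial_eq (a := Polynomial.C _)]
  simp only [Finsupp.prod, mul_pow, Finset.prod_mul_distrib, map_mul, map_prod, map_pow, mul_assoc]

lemma torusCoaction_apply (p : MvPolynomial σ R) :
    torusCoaction σ R p = ∑ e ∈ p.support, monomial e (Polynomial.C (monomial e (coeff e p))) := by
  conv_lhs => rw [p.as_sum, map_sum]
  simp only [torusCoaction_monomial]

lemma coeff_torusCoaction (p : MvPolynomial σ R) (e : σ →₀ ℕ) :
    coeff e (torusCoaction σ R p) = Polynomial.C (monomial e (coeff e p)) := by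
  classical
  rw [torusCoaction_apply, coeff_sum]
  simp only [coeff_monomial, Finset.sum_ite_eq', ite_eq_left_iff, notMem_support_iff]
  intro h
  rw [h, map_zero, map_zero]

end Coaction

variable {k : Type*} [Field k] {n : ℕ} {J : Ideal (MvPolynomial (Fin n) k)}

namespace IsMonomialIdeal

lemma exists_map_eq_torusCoaction (hJ : IsMonomialIdeal J) {i : ℕ} {a : MvPolynomial (Fin n) k}
    (ha : a ∈ J ^ i) :
    ∃ b : MvPolynomial (Fin n) (reesAlgebra J),
      map (algebraMap (reesAlgebra J) (Polynomial (MvPolynomial (Fin n) k))) b =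
        torusCoaction (Fin n) k a * C (Polynomial.X ^ i) := by
  have constituent_mem (e : Fin n →₀ ℕ) : monomial e (coeff e a) ∈ J ^ i := by
    by_cases he : e ∈ a.support
    · rw [← mul_one (coeff e a), ← C_mul_monomial]
      exact Ideal.mul_mem_left _ _ ((hJ.pow i).monomial_mem ha he)
    · rw [notMem_support_iff.1 he, map_zero]
      exact zero_mem _
  refine ⟨∑ e ∈ a.support, monomial e ⟨_, reesAlgebra.monomial_mem.2 (constituent_mem e)⟩, ?_⟩
  rw [torusCoaction_apply, map_sum, Finset.sum_mul]
  refine Finset.sum_congr rfl fun e _ => ?_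
  rw [map_monomial, mul_comm, C_mul_monomial, mul_comm, Polynomial.C_mul_X_pow_eq_monomial]
  rfl

lemma isIntegral_rees_monomial (hJ : IsMonomialIdeal J) {r : MvPolynomial (Fin n) k} {m : ℕ}
    {a : ℕ → MvPolynomial (Fin n) k} (ha : ∀ i, 1 ≤ i → i ≤ m → a i ∈ J ^ i)
    (hr : r ^ m + ∑ i ∈ Finset.Icc 1 m, a i * r ^ (m - i) = 0) (e : Fin n →₀ ℕ) :
    IsIntegral (reesAlgebra J) (Polynomial.monomial 1 (monomial e (coeff e r))) := by
  let _ := MvPolynomial.algebraMvPolynomial (σ := Fin n) (R := reesAlgebra J)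
    (S := Polynomial (MvPolynomial (Fin n) k))
  have root := map_mul_pow_add_sum_eq_zero
    (B := MvPolynomial (Fin n) (Polynomial (MvPolynomial (Fin n) k)))
    (torusCoaction (Fin n) k).toRingHom (C Polynomial.X) hr
  have integral := isIntegral_of_pow_add_sum_eq_zero (A := MvPolynomial (Fin n) (reesAlgebra J))
    (fun i h1 him => by
      obtain ⟨b, hb⟩ := hJ.exists_map_eq_torusCoaction (ha i h1 him)
      exact ⟨b, by rw [MvPolynomial.algebraMap_def, hb, map_pow]; rfl⟩) root
  have coeff_integral := MvPolynomial.isIntegral_iff_isIntegral_coeff.1 integral e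
  rw [mul_comm, coeff_C_mul, mul_comm] at coeff_integral
  rwa [← Polynomial.C_mul_X_eq_monomial, ← coeff_torusCoaction]

lemma exists_nsmul_mem_pow_of_isIntegral (hJ : IsMonomialIdeal J) {e : Fin n →₀ ℕ} {c : k}
    (hc : c ≠ 0) (h : IsIntegral (reesAlgebra J) (Polynomial.monomial 1 (monomial e c))) :
    ∃ s : ℕ, 1 ≤ s ∧ monomial (s • e) (1 : k) ∈ J ^ s := by
  obtain ⟨q, hq, hroot⟩ := h
  obtain ⟨m, hm⟩ : ∃ m, q.natDegree = m := ⟨_, rfl⟩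
  have coeff_term (l : ℕ) (hl : l ≤ m) :
      coeff (m • e) (((q.coeff l : Polynomial (MvPolynomial (Fin n) k)) *
        Polynomial.monomial 1 (monomial e c) ^ l).coeff m) =
      coeff ((m - l) • e) ((q.coeff l : Polynomial (MvPolynomial (Fin n) k)).coeff (m - l)) *
        c ^ l := by
    obtain ⟨j, rfl⟩ := Nat.exists_eq_add_of_le' hl
    rw [Polynomial.monomial_pow, one_mul, Polynomial.coeff_mul_monomial, monomial_pow,
      add_smul, coeff_mul_monomial, Nat.add_sub_cancel]
  have sum_eq_zero : ∑ l ∈ Finset.range m,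
      coeff ((m - l) • e) ((q.coeff l : Polynomial (MvPolynomial (Fin n) k)).coeff (m - l)) *
        c ^ l + c ^ m = 0 := by
    have root_coeff := congrArg (fun p => coeff (m • e) (Polynomial.coeff p m)) hroot
    simp only [Polynomial.eval₂_eq_sum_range, Polynomial.finsetSum_coeff, coeff_sum,
      Polynomial.coeff_zero, coeff_zero, hm] at root_coeff
    rw [← root_coeff, Finset.sum_range_succ]
    congr 1
    · exact Finset.sum_congr rfl fun l hl => (coeff_term l (Finset.mem_range.1 hl).le).symm
    · rw [← hm, hq.coeff_natDegree, map_one, one_mul, Polynomial.monomial_pow, one_mul,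
        Polynomial.coeff_monomial, if_pos rfl, monomial_pow, coeff_monomial, if_pos rfl]
  obtain ⟨l, hl, hne⟩ := Finset.exists_ne_zero_of_sum_ne_zero fun h =>
    pow_ne_zero m hc (by rwa [h, zero_add] at sum_eq_zero)
  refine ⟨m - l, Nat.sub_pos_of_lt (Finset.mem_range.1 hl), ?_⟩
  exact (hJ.pow _).monomial_mem ((q.coeff l).2 _) (mem_support_iff.2 (left_ne_zero_of_mul hne))

lemma intClos_eq_span_monomial (hJ : IsMonomialIdeal J) :
    intClos J = Ideal.span
      ((fun e => monomial e 1) '' {e | ∃ s : ℕ, 1 ≤ s ∧ monomial (s • e) (1 : k) ∈ J ^ s}) := by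
  apply le_antisymm
  · refine Ideal.span_le.2 ?_
    rintro r ⟨m, -, a, ha, hr⟩
    refine mem_of_forall_monomial_mem fun e he => Ideal.subset_span ⟨e, ?_, rfl⟩
    exact hJ.exists_nsmul_mem_pow_of_isIntegral (mem_support_iff.1 he)
      (hJ.isIntegral_rees_monomial ha hr e)
  · refine Ideal.span_le.2 ?_
    rintro _ ⟨e, ⟨s, hs, hse⟩, rfl⟩
    refine Ideal.subset_span ⟨s, hs, fun i => if i = s then -monomial (s • e) 1 else 0,
      fun i _ _ => ?_, ?_⟩
    · dsimp only
      split_ifs with hi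
      · rw [hi]
        exact neg_mem hse
      · exact zero_mem _
    · simp [ite_mul, Finset.sum_ite_eq', hs, monomial_pow]

lemma intClos (hJ : IsMonomialIdeal J) : IsMonomialIdeal (intClos J) :=
  ⟨_, hJ.intClos_eq_span_monomial⟩

lemma monomial_mem_intClos_iff (hJ : IsMonomialIdeal J) {e : Fin n →₀ ℕ} :
    monomial e (1 : k) ∈ _root_.intClos J ↔
      ∃ s : ℕ, 1 ≤ s ∧ monomial (s • e) (1 : k) ∈ J ^ s := by
  rw [hJ.intClos_eq_span_monomial, monomial_mem_span_monomial_iff]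
  constructor
  · rintro ⟨d, ⟨s, hs, hsd⟩, hde⟩
    exact ⟨s, hs, monomial_mem_of_le (by gcongr) hsd⟩
  · exact fun h => ⟨e, h, le_rfl⟩

lemma intClos_ne_top (hJ : IsMonomialIdeal J) (htop : J ≠ ⊤) : _root_.intClos J ≠ ⊤ := by
  rw [Ne, Ideal.eq_top_iff_one]
  intro h
  obtain ⟨s, hs, hmem⟩ := hJ.monomial_mem_intClos_iff (e := 0).1 h
  rw [smul_zero] at hmem
  exact htop ((Ideal.eq_top_iff_one J).2 (Ideal.pow_le_self (Nat.pos_iff_ne_zero.1 hs) hmem))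

end IsMonomialIdeal

lemma IsGoodLeaf.monomial_add_mem_intClos_pow_iff {E : Set (Finset (Fin n))} {F : Finset (Fin n)}
    (hF : IsGoodLeaf E F) {t : ℕ} {e : Fin n →₀ ℕ} :
    monomial (e + edgeExponent F) (1 : k) ∈ intClos (edgeIdealH k E ^ (t + 1)) ↔
      monomial e (1 : k) ∈ intClos (edgeIdealH k E ^ t) := by
  rw [(isMonomialIdeal_edgeIdealH.pow _).monomial_mem_intClos_iff,
    (isMonomialIdeal_edgeIdealH.pow _).monomial_mem_intClos_iff]
  refine exists_congr fun s => and_congr_right fun _ => ?_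
  rw [← pow_mul, ← pow_mul, add_mul, one_mul, smul_add]
  exact hF.monomial_add_nsmul_mem_pow_iff

end IntegralClosure

section Grading

variable {σ k : Type*} [CommRing k]

/-- The component of degree `d ∈ ℤ` of a polynomial, which is zero for `d < 0`. A polynomial `p`
is homogeneous of degree `d` if and only if `homogComp d p = p`. -/
noncomputable def homogComp (d : ℤ) : MvPolynomial σ k →ₗ[k] MvPolynomial σ k :=
  if 0 ≤ d then homogeneousComponent d.toNat else 0

lemma coeff_homogComp (d : ℤ) (p : MvPolynomial σ k) (e : σ →₀ ℕ) :
    coeff e (homogComp d p) = if (e.degree : ℤ) = d then coeff e p else 0 := by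
  unfold homogComp
  split_ifs with hd he he
  · rw [coeff_homogeneousComponent, if_pos (by omega)]
  · rw [coeff_homogeneousComponent, if_neg (by omega)]
  · omega
  · simp

lemma homogComp_of_neg {d : ℤ} (hd : d < 0) (p : MvPolynomial σ k) : homogComp d p = 0 := by
  rw [homogComp, if_neg (by omega), LinearMap.zero_apply]

lemma homogComp_zero (p : MvPolynomial σ k) : homogComp 0 p = C (coeff 0 p) := by
  rw [homogComp, if_pos le_rfl, Int.toNat_zero, homogeneousComponent_zero]

lemma homogComp_homogComp (d : ℤ) (p : MvPolynomial σ k) :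
    homogComp d (homogComp d p) = homogComp d p := by
  ext e
  simp only [coeff_homogComp]
  split_ifs <;> rfl

lemma homogComp_monomial (e : σ →₀ ℕ) (a : k) :
    homogComp e.degree (monomial e a) = monomial e a := by
  classical
  ext e'
  rw [coeff_homogComp, coeff_monomial]
  split_ifs with h h' h' <;> first | rfl | (subst h'; exact absurd rfl h)

lemma homogComp_X (i : σ) : homogComp 1 (X i : MvPolynomial σ k) = X i := by
  have h := homogComp_monomial (Finsupp.single i 1) (1 : k)
  rwa [Finsupp.degree_single, Nat.cast_one] at h

lemma homogComp_one : homogComp 0 (1 : MvPolynomial σ k) = 1 := by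
  have h := homogComp_monomial (0 : σ →₀ ℕ) (1 : k)
  rwa [map_zero Finsupp.degree, Nat.cast_zero] at h

lemma homogComp_mul {a : ℤ} {p : MvPolynomial σ k} (hp : homogComp a p = p) (d : ℤ)
    (q : MvPolynomial σ k) : homogComp d (p * q) = p * homogComp (d - a) q := by
  classical
  ext e
  rw [coeff_homogComp, coeff_mul, coeff_mul, ← boole_mul, Finset.mul_sum]
  refine Finset.sum_congr rfl fun x hx => ?_
  by_cases h0 : coeff x.1 p = 0
  · rw [h0, zero_mul, zero_mul, mul_zero]
  have degree_left : (x.1.degree : ℤ) = a := by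
    by_contra h
    rw [← hp, coeff_homogComp, if_neg h] at h0
    exact h0 rfl
  have degree_add : x.1.degree + x.2.degree = e.degree := by
    rw [← Finset.HasAntidiagonal.mem_antidiagonal.1 hx, map_add]
  rw [boole_mul, coeff_homogComp, mul_ite, mul_zero]
  exact if_congr (by omega) rfl rfl

lemma sum_homogComp (p : MvPolynomial σ k) {s : Finset ℤ}
    (hs : ∀ e ∈ p.support, (e.degree : ℤ) ∈ s) : ∑ d ∈ s, homogComp d p = p := by
  ext e
  simp only [coeff_sum, coeff_homogComp, Finset.sum_ite_eq]
  rw [ite_eq_left_iff]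
  exact fun he => (notMem_support_iff.1 fun h => he (hs e h)).symm

end Grading

lemma homogOfDeg_iff {k : Type*} [Field k] {n : ℕ} {p : MvPolynomial (Fin n) k} {d : ℤ} :
    HomogOfDeg p d ↔ homogComp d p = p := by
  constructor
  · rintro (rfl | ⟨m, rfl, hm⟩)
    · rw [map_zero]
    · ext e
      rw [coeff_homogComp, ite_eq_left_iff]
      intro he
      exact (hm.coeff_eq_zero (by exact_mod_cast he)).symm
  · intro h
    rcases lt_or_ge d 0 with hd | hd
    · exact .inl (by rw [← h, homogComp_of_neg hd])
    · refine .inr ⟨d.toNat, Int.toNat_of_nonneg hd, ?_⟩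
      rw [← h, homogComp, if_pos hd]
      exact homogeneousComponent_isHomogeneous _ _

section GradedFree

variable {σ k : Type*} [CommRing k] {ι κ μ : Type*}

/-- The component of degree `d` of a vector in the graded free module `⨁ j, S(-c j)`, whose
`j`-th basis vector has degree `c j`. -/
noncomputable def homogPart (c : ι → ℤ) (d : ℤ) :
    (ι → MvPolynomial σ k) →ₗ[k] (ι → MvPolynomial σ k) :=
  LinearMap.pi fun j => homogComp (d - c j) ∘ₗ LinearMap.proj j

lemma homogPart_apply (c : ι → ℤ) (d : ℤ) (v : ι → MvPolynomial σ k) (j : ι) :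
    homogPart c d v j = homogComp (d - c j) (v j) := rfl

lemma homogPart_homogPart (c : ι → ℤ) (d : ℤ) (v : ι → MvPolynomial σ k) :
    homogPart c d (homogPart c d v) = homogPart c d v :=
  funext fun _ => homogComp_homogComp _ _

lemma homogPart_smul {a : ℤ} {p : MvPolynomial σ k} (hp : homogComp a p = p) (c : ι → ℤ) (d : ℤ)
    (v : ι → MvPolynomial σ k) : homogPart c d (p • v) = p • homogPart c (d - a) v := by
  funext j
  rw [Pi.smul_apply, homogPart_apply, Pi.smul_apply, homogPart_apply, smul_eq_mul,
    homogComp_mul hp, smul_eq_mul, sub_right_comm]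

lemma homogPart_smul_of_eq {c : ι → ℤ} {a : ℤ} {v : ι → MvPolynomial σ k}
    (hv : homogPart c a v = v) (d : ℤ) (p : MvPolynomial σ k) :
    homogPart c d (p • v) = homogComp (d - a) p • v := by
  funext j
  have hvj : homogComp (a - c j) (v j) = v j := congrFun hv j
  rw [homogPart_apply, Pi.smul_apply, Pi.smul_apply, smul_eq_mul, smul_eq_mul, mul_comm,
    homogComp_mul hvj, mul_comm, sub_sub_sub_cancel_right]

lemma exists_sum_homogPart_eq [Finite ι] (c : ι → ℤ) (v : ι → MvPolynomial σ k) :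
    ∃ s : Finset ℤ, ∑ d ∈ s, homogPart c d v = v := by
  classical
  have := Fintype.ofFinite ι
  let s := Finset.univ.biUnion fun j => (v j).support.image fun e => (e.degree : ℤ) + c j
  refine ⟨s, funext fun j => ?_⟩
  rw [Finset.sum_apply]
  simp only [homogPart_apply]
  rw [← Finset.sum_image (f := fun d => homogComp d (v j)) (g := fun d => d - c j)
    (sub_left_injective.injOn)]
  refine sum_homogComp _ fun e he =>
    Finset.mem_image.2 ⟨e.degree + c j, ?_, add_sub_cancel_right _ _⟩
  exact Finset.mem_biUnion.2 ⟨j, Finset.mem_univ j, Finset.mem_image_of_mem _ he⟩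

lemma homogPart_single [DecidableEq ι] (c : ι → ℤ) (j : ι) :
    homogPart c (c j) (Pi.single j (1 : MvPolynomial σ k)) = Pi.single j 1 := by
  funext i
  rw [homogPart_apply]
  obtain rfl | hij := eq_or_ne i j
  · rw [sub_self, Pi.single_eq_same, homogComp_one]
  · rw [Pi.single_eq_of_ne hij, map_zero]

/-- A graded submodule of the graded free module `⨁ j, S(-c j)`. -/
def IsGradedSubmodule (c : ι → ℤ) (N : Submodule (MvPolynomial σ k) (ι → MvPolynomial σ k)) :
    Prop :=
  ∀ d, ∀ v ∈ N, homogPart c d v ∈ N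

/-- A homomorphism `⨁ j, S(-c j) → ⨁ i, S(-d i)` of graded free modules which preserves degrees. -/
def IsGradedMap (c : ι → ℤ) (d : κ → ℤ)
    (φ : (ι → MvPolynomial σ k) →ₗ[MvPolynomial σ k] (κ → MvPolynomial σ k)) : Prop :=
  ∀ a v, homogPart d a (φ v) = φ (homogPart c a v)

variable {c : ι → ℤ} {d : κ → ℤ} {b : μ → ℤ}

namespace IsGradedSubmodule

variable {N P : Submodule (MvPolynomial σ k) (ι → MvPolynomial σ k)}

lemma le_of_forall_homogPart_mem [Finite ι] (hN : IsGradedSubmodule c N)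
    (h : ∀ a, ∀ v ∈ N, homogPart c a v = v → v ∈ P) : N ≤ P := by
  intro v hv
  obtain ⟨s, hs⟩ := exists_sum_homogPart_eq c v
  rw [← hs]
  exact P.sum_mem fun a _ => h a _ (hN a v hv) (homogPart_homogPart c a v)

/-- The graded Nakayama lemma, for multiplication by one homogeneous element. -/
lemma le_of_le_sup_map_lsmul [Finite ι] {x : MvPolynomial σ k} (hx : homogComp 1 x = x)
    (hN : IsGradedSubmodule c N) (hP : IsGradedSubmodule c P)
    (h : N ≤ P ⊔ N.map (LinearMap.lsmul _ _ x)) : N ≤ P := by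
  obtain ⟨a₀, ha₀⟩ := (Set.finite_range c).bddBelow
  suffices low : ∀ i : ℕ, ∀ a < a₀ + i, ∀ v ∈ N, homogPart c a v = v → v ∈ P from
    hN.le_of_forall_homogPart_mem fun a v hv hva =>
      low (a - a₀ + 1).toNat a (by omega) v hv hva
  intro i
  induction i with
  | zero =>
    intro a ha v _ hva
    have : v = 0 := by
      rw [← hva]
      funext j
      have := ha₀ ⟨j, rfl⟩
      exact homogComp_of_neg (by omega) _
    exact this ▸ P.zero_mem
  | succ i ih =>
    intro a ha v hv hva
    obtain ⟨p, hp, _, ⟨w, hw, rfl⟩, hpw⟩ := Submodule.mem_sup.1 (h hv)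
    rw [← hva, ← hpw, map_add, LinearMap.lsmul_apply, homogPart_smul hx]
    refine P.add_mem (hP a p hp) (P.smul_mem x (ih (a - 1) (by omega) _ (hN _ w hw) ?_))
    exact homogPart_homogPart _ _ _

end IsGradedSubmodule

namespace IsGradedMap

variable {φ ψ : (ι → MvPolynomial σ k) →ₗ[MvPolynomial σ k] (κ → MvPolynomial σ k)}

lemma id (c : ι → ℤ) : IsGradedMap c c (LinearMap.id (R := MvPolynomial σ k)) :=
  fun _ _ => rfl

lemma comp {χ : (κ → MvPolynomial σ k) →ₗ[MvPolynomial σ k] (μ → MvPolynomial σ k)}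
    (hχ : IsGradedMap d b χ) (hφ : IsGradedMap c d φ) : IsGradedMap c b (χ ∘ₗ φ) :=
  fun a v => (hχ a (φ v)).trans (congrArg χ (hφ a v))

lemma add (hφ : IsGradedMap c d φ) (hψ : IsGradedMap c d ψ) : IsGradedMap c d (φ + ψ) := by
  intro a v
  rw [LinearMap.add_apply, map_add, hφ, hψ, LinearMap.add_apply]

lemma sub (hφ : IsGradedMap c d φ) (hψ : IsGradedMap c d ψ) : IsGradedMap c d (φ - ψ) := by
  intro a v
  rw [LinearMap.sub_apply, map_sub, hφ, hψ, LinearMap.sub_apply]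

lemma smul {x : MvPolynomial σ k} (hx : homogComp 1 x = x)
    (hφ : IsGradedMap (fun j => c j - 1) d φ) : IsGradedMap c d (x • φ) := by
  intro a v
  rw [LinearMap.smul_apply, homogPart_smul hx, hφ, LinearMap.smul_apply]
  congr 2
  funext j
  rw [homogPart_apply, homogPart_apply, sub_sub_sub_cancel_right]

lemma isGradedSubmodule_ker (hφ : IsGradedMap c d φ) : IsGradedSubmodule c (LinearMap.ker φ) := by
  intro a v hv
  rw [LinearMap.mem_ker, ← hφ, LinearMap.mem_ker.1 hv, map_zero]

lemma isGradedSubmodule_map (hφ : IsGradedMap c d φ)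
    {N : Submodule (MvPolynomial σ k) (ι → MvPolynomial σ k)} (hN : IsGradedSubmodule c N) :
    IsGradedSubmodule d (N.map φ) := by
  rintro a _ ⟨v, hv, rfl⟩
  exact ⟨_, hN a v hv, (hφ a v).symm⟩

lemma isGradedSubmodule_range (hφ : IsGradedMap c d φ) :
    IsGradedSubmodule d (LinearMap.range φ) := by
  rw [LinearMap.range_eq_map]
  exact hφ.isGradedSubmodule_map fun _ _ _ => Submodule.mem_top

end IsGradedMap

lemma isGradedMap_iff_single [Finite ι] [DecidableEq ι]
    {φ : (ι → MvPolynomial σ k) →ₗ[MvPolynomial σ k] (κ → MvPolynomial σ k)} :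
    IsGradedMap c d φ ↔
      ∀ j, homogPart d (c j) (φ (Pi.single j 1)) = φ (Pi.single j 1) := by
  have := Fintype.ofFinite ι
  refine ⟨fun h j => by rw [h, homogPart_single], fun h a v => ?_⟩
  rw [φ.pi_apply_eq_sum_univ v, φ.pi_apply_eq_sum_univ (homogPart c a v), map_sum]
  refine Finset.sum_congr rfl fun j _ => ?_
  have single_eq : (fun i => if j = i then (1 : MvPolynomial σ k) else 0) = Pi.single j 1 := by
    funext i
    simp only [Pi.single_apply, eq_comm]
  rw [single_eq, homogPart_smul_of_eq (h j), homogPart_apply]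

lemma exists_isGradedMap_apply_single [Finite ι] [DecidableEq ι]
    {w : ι → κ → MvPolynomial σ k} (hw : ∀ j, homogPart d (c j) (w j) = w j) :
    ∃ φ, IsGradedMap c d φ ∧ ∀ j, φ (Pi.single j 1) = w j := by
  have := Fintype.ofFinite ι
  have apply_single (j : ι) :
      Fintype.linearCombination (MvPolynomial σ k) w (Pi.single j 1) = w j := by
    rw [Fintype.linearCombination_apply_single, one_smul]
  exact ⟨_, isGradedMap_iff_single.2 fun j => by rw [apply_single, hw], apply_single⟩

lemma IsGradedMap.exists_lift [Finite μ]
    {φ : (ι → MvPolynomial σ k) →ₗ[MvPolynomial σ k] (κ → MvPolynomial σ k)}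
    (hφ : IsGradedMap c d φ)
    {α : (μ → MvPolynomial σ k) →ₗ[MvPolynomial σ k] (κ → MvPolynomial σ k)}
    (hα : IsGradedMap b d α) (h : LinearMap.range α ≤ LinearMap.range φ) :
    ∃ χ, IsGradedMap b c χ ∧ φ ∘ₗ χ = α := by
  classical
  choose w hw using fun j => h ⟨Pi.single j 1, rfl⟩
  obtain ⟨χ, hχ, hχw⟩ := exists_isGradedMap_apply_single (w := fun j => homogPart c (b j) (w j))
    fun j => homogPart_homogPart _ _ _
  refine ⟨χ, hχ, LinearMap.pi_ext' fun j => LinearMap.ext_ring ?_⟩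
  change φ (χ (Pi.single j 1)) = α (Pi.single j 1)
  rw [hχw, ← hφ, hw, hα, homogPart_single]

end GradedFree

section SumMaps

variable {R M : Type*} [CommRing R] [AddCommGroup M] [Module R M] {ι κ : Type*}

/-- The map `(v, w) ↦ f v + g w` out of the free module on a disjoint union. -/
def coprodSum (f : (ι → R) →ₗ[R] M) (g : (κ → R) →ₗ[R] M) : (ι ⊕ κ → R) →ₗ[R] M :=
  f ∘ₗ LinearMap.funLeft R R Sum.inl + g ∘ₗ LinearMap.funLeft R R Sum.inr

/-- The map `v ↦ (f v, g v)` into the free module on a disjoint union. -/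
def prodSum (f : M →ₗ[R] ι → R) (g : M →ₗ[R] κ → R) : M →ₗ[R] (ι ⊕ κ → R) :=
  (LinearEquiv.sumArrowLequivProdArrow ι κ R R).symm.toLinearMap ∘ₗ f.prod g

lemma coprodSum_apply (f : (ι → R) →ₗ[R] M) (g : (κ → R) →ₗ[R] M) (v : ι ⊕ κ → R) :
    coprodSum f g v = f (v ∘ Sum.inl) + g (v ∘ Sum.inr) := rfl

lemma coprodSum_elim (f : (ι → R) →ₗ[R] M) (g : (κ → R) →ₗ[R] M) (v : ι → R) (w : κ → R) :
    coprodSum f g (Sum.elim v w) = f v + g w := rfl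

lemma prodSum_apply (f : M →ₗ[R] ι → R) (g : M →ₗ[R] κ → R) (v : M) :
    prodSum f g v = Sum.elim (f v) (g v) := rfl

lemma range_coprodSum (f : (ι → R) →ₗ[R] M) (g : (κ → R) →ₗ[R] M) :
    LinearMap.range (coprodSum f g) = LinearMap.range f ⊔ LinearMap.range g := by
  apply le_antisymm
  · rintro _ ⟨v, rfl⟩
    exact Submodule.add_mem_sup ⟨_, rfl⟩ ⟨_, rfl⟩
  · refine sup_le ?_ ?_
    · rintro _ ⟨v, rfl⟩
      exact ⟨Sum.elim v 0, by rw [coprodSum_elim, map_zero, add_zero]⟩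
    · rintro _ ⟨w, rfl⟩
      exact ⟨Sum.elim 0 w, by rw [coprodSum_elim, map_zero, zero_add]⟩

lemma mem_map_prodSum_id_zero_iff {N : Submodule R (ι → R)} {v : ι ⊕ κ → R} :
    v ∈ N.map (prodSum LinearMap.id (0 : (ι → R) →ₗ[R] κ → R)) ↔
      v ∘ Sum.inl ∈ N ∧ v ∘ Sum.inr = 0 := by
  constructor
  · rintro ⟨w, hw, rfl⟩
    exact ⟨hw, rfl⟩
  · rintro ⟨hl, hr⟩
    exact ⟨_, hl, by rw [prodSum_apply, LinearMap.zero_apply, ← hr]; exact Sum.elim_comp_inl_inr v⟩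

lemma range_le_iff_single [Finite ι] [DecidableEq ι] {f : (ι → R) →ₗ[R] M} {N : Submodule R M} :
    LinearMap.range f ≤ N ↔ ∀ j, f (Pi.single j 1) ∈ N := by
  rw [LinearMap.range_eq_map, ← (Pi.basisFun R ι).span_eq, Submodule.map_span_le,
    Set.forall_mem_range]
  simp only [Pi.basisFun_apply]

end SumMaps

section GradedSumMaps

variable {σ k : Type*} [CommRing k] {ι κ μ : Type*} {c : ι → ℤ} {d : κ → ℤ} {b : μ → ℤ}

lemma IsGradedMap.coprodSum
    {f : (ι → MvPolynomial σ k) →ₗ[MvPolynomial σ k] (μ → MvPolynomial σ k)}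
    {g : (κ → MvPolynomial σ k) →ₗ[MvPolynomial σ k] (μ → MvPolynomial σ k)}
    (hf : IsGradedMap c b f) (hg : IsGradedMap d b g) :
    IsGradedMap (Sum.elim c d) b (coprodSum f g) := by
  intro a v
  rw [coprodSum_apply, map_add, hf, hg]
  rfl

lemma IsGradedMap.prodSum
    {f : (μ → MvPolynomial σ k) →ₗ[MvPolynomial σ k] (ι → MvPolynomial σ k)}
    {g : (μ → MvPolynomial σ k) →ₗ[MvPolynomial σ k] (κ → MvPolynomial σ k)}
    (hf : IsGradedMap b c f) (hg : IsGradedMap b d g) :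
    IsGradedMap b (Sum.elim c d) (prodSum f g) := by
  intro a v
  rw [prodSum_apply, prodSum_apply, ← hf, ← hg]
  funext j
  cases j <;> rfl

lemma IsGradedMap.zero (c : ι → ℤ) (d : κ → ℤ) :
    IsGradedMap c d (0 : (ι → MvPolynomial σ k) →ₗ[MvPolynomial σ k] (κ → MvPolynomial σ k)) :=
  fun _ _ => map_zero _

end GradedSumMaps

section ResolutionBound

variable {σ k : Type*} [CommRing k] {ι κ : Type} {c : ι → ℤ} {d : κ → ℤ}

/-- The submodule `N` of the graded free module `⨁ j, S(-d j)` has a graded free resolution whose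
first `l` terms `F₀, …, F_{l-1}` have finite rank, with `Fᵢ` generated in degrees at most
`r + i`. -/
def HasResolutionBound : ℕ → ℤ → ∀ {ι : Type}, (ι → ℤ) →
    Submodule (MvPolynomial σ k) (ι → MvPolynomial σ k) → Prop
  | 0, _, _, _, _ => True
  | l + 1, r, ι, d, N => ∃ (κ : Type) (_ : Finite κ) (c : κ → ℤ)
      (φ : (κ → MvPolynomial σ k) →ₗ[MvPolynomial σ k] (ι → MvPolynomial σ k)),
      IsGradedMap c d φ ∧ LinearMap.range φ = N ∧ (∀ j, c j ≤ r) ∧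
        HasResolutionBound l (r + 1) c (LinearMap.ker φ)

namespace HasResolutionBound

variable {N : Submodule (MvPolynomial σ k) (ι → MvPolynomial σ k)} {l : ℕ} {r : ℤ}

lemma mono (h : HasResolutionBound l r c N) {s : ℤ} (hrs : r ≤ s) :
    HasResolutionBound l s c N := by
  induction l generalizing r s ι with
  | zero => trivial
  | succ l ih =>
    obtain ⟨κ, hκ, d, φ, hφ, hrange, hd, hker⟩ := h
    exact ⟨κ, hκ, d, φ, hφ, hrange, fun j => (hd j).trans hrs, ih hker (by omega)⟩

lemma map (h : HasResolutionBound l r c N)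
    {ψ : (ι → MvPolynomial σ k) →ₗ[MvPolynomial σ k] (κ → MvPolynomial σ k)}
    (hψ : IsGradedMap c d ψ) (hinj : ∀ v ∈ N, ψ v = 0 → v = 0) :
    HasResolutionBound l r d (N.map ψ) := by
  cases l with
  | zero => trivial
  | succ l =>
    obtain ⟨μ, hμ, b, φ, hφ, rfl, hb, hker⟩ := h
    refine ⟨μ, hμ, b, ψ ∘ₗ φ, hψ.comp hφ, LinearMap.range_comp _ _, hb, ?_⟩
    have ker_comp : LinearMap.ker (ψ ∘ₗ φ) = LinearMap.ker φ :=
      le_antisymm (fun v hv => hinj _ ⟨v, rfl⟩ hv) (LinearMap.ker_le_ker_comp φ ψ)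
    rwa [ker_comp]

lemma map_prodSum_id_zero (h : HasResolutionBound l r c N) (d : κ → ℤ) :
    HasResolutionBound l r (Sum.elim c d)
      (N.map (prodSum LinearMap.id (0 : _ →ₗ[MvPolynomial σ k] κ → MvPolynomial σ k))) :=
  h.map ((IsGradedMap.id c).prodSum (IsGradedMap.zero c d))
    fun _ _ hv => congrArg (fun v => v ∘ Sum.inl) hv

lemma sup_range [Finite κ] (h : HasResolutionBound l r c N)
    {ψ : (κ → MvPolynomial σ k) →ₗ[MvPolynomial σ k] (ι → MvPolynomial σ k)}
    (hψ : IsGradedMap d c ψ) (hd : ∀ j, d j ≤ r) (hinj : ∀ v, ψ v ∈ N → v = 0) :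
    HasResolutionBound l r c (N ⊔ LinearMap.range ψ) := by
  cases l with
  | zero => trivial
  | succ l =>
    obtain ⟨μ, hμ, b, φ, hφ, rfl, hb, hker⟩ := h
    refine ⟨μ ⊕ κ, inferInstance, Sum.elim b d, coprodSum φ ψ, hφ.coprodSum hψ,
      range_coprodSum φ ψ, Sum.rec hb hd, ?_⟩
    have ker_eq :
        LinearMap.ker (coprodSum φ ψ) = (LinearMap.ker φ).map (prodSum LinearMap.id 0) := by
      ext v
      rw [mem_map_prodSum_id_zero_iff, LinearMap.mem_ker, LinearMap.mem_ker, coprodSum_apply]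
      constructor
      · intro hv
        have right_eq_zero : v ∘ Sum.inr = 0 :=
          hinj _ (by rw [eq_neg_of_add_eq_zero_right hv]; exact neg_mem ⟨_, rfl⟩)
        rw [right_eq_zero, map_zero, add_zero] at hv
        exact ⟨hv, right_eq_zero⟩
      · rintro ⟨hl, hr⟩
        rw [hl, hr, map_zero, add_zero]
    rw [ker_eq]
    exact hker.map_prodSum_id_zero d

end HasResolutionBound

/-- Degree-preserving maps `α : ⨁ S(-d i) → ⨁ S(-c j)` and `β` in the other direction induce
mutually inverse isomorphisms between the quotients by `P` and by `N`. -/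
structure IsGradedQuotientEquiv (c : ι → ℤ) (d : κ → ℤ)
    (N : Submodule (MvPolynomial σ k) (ι → MvPolynomial σ k))
    (P : Submodule (MvPolynomial σ k) (κ → MvPolynomial σ k))
    (α : (κ → MvPolynomial σ k) →ₗ[MvPolynomial σ k] (ι → MvPolynomial σ k))
    (β : (ι → MvPolynomial σ k) →ₗ[MvPolynomial σ k] (κ → MvPolynomial σ k)) : Prop where
  left_graded : IsGradedMap d c α
  right_graded : IsGradedMap c d β
  left_mem : ∀ w ∈ P, α w ∈ N
  right_mem : ∀ v ∈ N, β v ∈ P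
  left_right : ∀ v, α (β v) - v ∈ N
  right_left : ∀ w, w - β (α w) ∈ P

namespace IsGradedQuotientEquiv

variable {N : Submodule (MvPolynomial σ k) (ι → MvPolynomial σ k)}
  {P : Submodule (MvPolynomial σ k) (κ → MvPolynomial σ k)}
  {α : (κ → MvPolynomial σ k) →ₗ[MvPolynomial σ k] (ι → MvPolynomial σ k)}
  {β : (ι → MvPolynomial σ k) →ₗ[MvPolynomial σ k] (κ → MvPolynomial σ k)}

lemma range_coprodSum_eq (h : IsGradedQuotientEquiv c d N P α β) {μ : Type}
    {z : (μ → MvPolynomial σ k) →ₗ[MvPolynomial σ k] (ι → MvPolynomial σ k)}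
    (hz : LinearMap.range z = N) :
    LinearMap.range (coprodSum (β ∘ₗ z) (LinearMap.id - β ∘ₗ α)) = P := by
  rw [range_coprodSum]
  apply le_antisymm
  · refine sup_le ?_ ?_
    · rintro _ ⟨u, rfl⟩
      exact h.right_mem _ (hz ▸ ⟨u, rfl⟩)
    · rintro _ ⟨w, rfl⟩
      exact h.right_left w
  · intro w hw
    obtain ⟨u, hu⟩ : α w ∈ LinearMap.range z := hz ▸ h.left_mem w hw
    refine Submodule.mem_sup.2 ⟨_, ⟨u, rfl⟩, _, ⟨w, rfl⟩, ?_⟩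
    rw [LinearMap.comp_apply, hu, LinearMap.sub_apply, LinearMap.id_apply, LinearMap.comp_apply,
      add_sub_cancel]

/-- If `β z p + q - β α q = 0`, then `y = α q - z p` satisfies `β y = q` and `z (p - χ y) = 0`. -/
lemma ker_coprodSum_eq {μ : Type}
    {z : (μ → MvPolynomial σ k) →ₗ[MvPolynomial σ k] (ι → MvPolynomial σ k)}
    {χ : (ι → MvPolynomial σ k) →ₗ[MvPolynomial σ k] (μ → MvPolynomial σ k)}
    (hχ : z ∘ₗ χ = α ∘ₗ β - LinearMap.id) :
    LinearMap.ker (coprodSum (β ∘ₗ z) (LinearMap.id - β ∘ₗ α)) =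
      (LinearMap.ker z).map (prodSum LinearMap.id 0) ⊔ LinearMap.range (prodSum χ β) := by
  have hχ (v) : z (χ v) = α (β v) - v := LinearMap.congr_fun hχ v
  apply le_antisymm
  · intro v hv
    obtain ⟨p, q, rfl⟩ : ∃ p q, v = Sum.elim p q := ⟨_, _, (Sum.elim_comp_inl_inr v).symm⟩
    have hpq : β (z p) + (q - β (α q)) = 0 := hv
    have hβ : β (α q - z p) = q := by
      rw [map_sub, sub_eq_iff_eq_add', ← sub_eq_zero, ← neg_eq_zero, ← hpq]
      abel
    refine Submodule.mem_sup.2 ⟨Sum.elim (p - χ (α q - z p)) 0, ?_, _, ⟨α q - z p, rfl⟩, ?_⟩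
    · refine mem_map_prodSum_id_zero_iff.2 ⟨?_, rfl⟩
      change z (p - χ (α q - z p)) = 0
      rw [map_sub, hχ, hβ]
      abel
    · rw [prodSum_apply, hβ]
      funext j
      cases j with
      | inl j => exact sub_add_cancel _ _
      | inr j => exact zero_add _
  · refine sup_le ?_ ?_
    · rintro _ ⟨p, hp, rfl⟩
      change β (z p) + (0 - β (α 0)) = 0
      rw [LinearMap.mem_ker.1 hp, map_zero, map_zero, map_zero, sub_zero, add_zero]
    · rintro _ ⟨v, rfl⟩
      change β (z (χ v)) + (β v - β (α (β v))) = 0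
      rw [hχ, map_sub]
      abel

/-- Schanuel's lemma: a bound on the twists depends only on the quotient module. -/
lemma hasResolutionBound [Finite ι] [Finite κ] (h : IsGradedQuotientEquiv c d N P α β) {l : ℕ}
    {r : ℤ} (hc : ∀ j, c j ≤ r + 1) (hd : ∀ j, d j ≤ r) (hN : HasResolutionBound l r c N) :
    HasResolutionBound l r d P := by
  cases l with
  | zero => trivial
  | succ l =>
    obtain ⟨μ, hμ, b, z, hz, hrange, hb, hker⟩ := hN
    obtain ⟨χ, hχ, hχz⟩ := hz.exists_lift
      ((h.left_graded.comp h.right_graded).sub (IsGradedMap.id c)) (by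
        rw [hrange]
        rintro _ ⟨v, rfl⟩
        exact h.left_right v)
    refine ⟨μ ⊕ κ, inferInstance, Sum.elim b d, coprodSum (β ∘ₗ z) (LinearMap.id - β ∘ₗ α),
      (h.right_graded.comp hz).coprodSum
        ((IsGradedMap.id d).sub (h.right_graded.comp h.left_graded)),
      h.range_coprodSum_eq hrange, Sum.rec hb hd, ?_⟩
    rw [ker_coprodSum_eq hχz]
    refine (hker.map_prodSum_id_zero d).sup_range (hχ.prodSum h.right_graded) hc fun v hv => ?_
    obtain ⟨hzχ, hβ⟩ := mem_map_prodSum_id_zero_iff.1 hv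
    have hzχ : z (χ v) = 0 := hzχ
    have hβ : β v = 0 := hβ
    rwa [← LinearMap.comp_apply, hχz, LinearMap.sub_apply, LinearMap.comp_apply, hβ, map_zero,
      LinearMap.id_apply, zero_sub, neg_eq_zero] at hzχ

end IsGradedQuotientEquiv

end ResolutionBound

section ColonSplittingSyzygy

variable {R M : Type*} [CommRing R] [AddCommGroup M] [Module R M] {x : R} {ι κ : Type*}

lemma IsColonSplitting.range_coprodSum_eq {N L E : Submodule R M} (h : IsColonSplitting x N L E)
    {A B : (ι → R) →ₗ[R] M}
    (hrange : LinearMap.range (A + x • B) = N) (hA : LinearMap.range A = L)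
    (hB : LinearMap.range B ≤ E) : LinearMap.range (coprodSum A B) = E := by
  rw [range_coprodSum, hA]
  refine le_antisymm (sup_le h.le hB) fun v hv => ?_
  obtain ⟨u, hu⟩ : x • v ∈ LinearMap.range (A + x • B) := hrange ▸ h.smul_mem hv
  have sub_mem : v - B u ∈ L := by
    refine h.mem_of_smul_mem _ (hA ▸ ⟨u, ?_⟩)
    rw [smul_sub, ← hu, LinearMap.add_apply, LinearMap.smul_apply, add_sub_cancel_right]
  exact Submodule.mem_sup.2 ⟨_, sub_mem, _, ⟨u, rfl⟩, sub_add_cancel _ _⟩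

/-- `x A u + x B w = A (x u) + B (x w)`, and conversely `A u + x B w = 0` forces `B w = A u'`. -/
lemma isColonSplitting_ker_coprodSum (hx : ∀ a : R, x * a = 0 → a = 0)
    (hM : ∀ v : M, x • v = 0 → v = 0) {A : (ι → R) →ₗ[R] M} {B : (κ → R) →ₗ[R] M}
    (hB : ∀ w, x • B w ∈ LinearMap.range A → B w ∈ LinearMap.range A) :
    IsColonSplitting x
      ((LinearMap.ker (coprodSum A (x • B))).map
        (prodSum (LinearMap.funLeft R R Sum.inl) (x • LinearMap.funLeft R R Sum.inr)))
      ((LinearMap.ker A).map (prodSum LinearMap.id 0)) (LinearMap.ker (coprodSum A B)) where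
  le := by
    rintro _ ⟨u, hu, rfl⟩
    rw [LinearMap.mem_ker, prodSum_apply, coprodSum_elim, LinearMap.zero_apply, map_zero, add_zero]
    exact hu
  mem_of_smul_mem v hv := by
    obtain ⟨hl, hr⟩ := mem_map_prodSum_id_zero_iff.1 hv
    refine mem_map_prodSum_id_zero_iff.2 ⟨hM _ ?_, funext fun j => hx _ (congrFun hr j)⟩
    rw [← map_smul]
    exact hl
  eq_sup := by
    apply le_antisymm
    · rintro _ ⟨v, hv, rfl⟩
      obtain ⟨u, w, rfl⟩ : ∃ u w, v = Sum.elim u w := ⟨_, _, (Sum.elim_comp_inl_inr v).symm⟩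
      have hv : A u + x • B w = 0 := hv
      obtain ⟨u', hu'⟩ := hB w ⟨-u, by rw [map_neg, neg_eq_of_add_eq_zero_right hv]⟩
      refine Submodule.mem_sup.2 ⟨Sum.elim (u + x • u') 0, ?_, _, ⟨Sum.elim (-u') w, ?_, rfl⟩, ?_⟩
      · refine mem_map_prodSum_id_zero_iff.2 ⟨?_, rfl⟩
        change A (u + x • u') = 0
        rw [map_add, map_smul, hu', hv]
      · change A (-u') + B w = 0
        rw [map_neg, hu', neg_add_cancel]
      · funext j
        cases j with
        | inl j => simp [prodSum_apply]
        | inr j => simp [prodSum_apply]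
    · refine sup_le ?_ ?_
      · rintro _ ⟨u, hu, rfl⟩
        refine ⟨Sum.elim u 0, ?_, ?_⟩
        · change A u + x • B 0 = 0
          rw [LinearMap.mem_ker.1 hu, map_zero, smul_zero, add_zero]
        · change Sum.elim u (x • 0) = Sum.elim u 0
          rw [smul_zero]
      · rintro _ ⟨v, hv, rfl⟩
        refine ⟨Sum.elim (x • v ∘ Sum.inl) (v ∘ Sum.inr), ?_, ?_⟩
        · change A (x • v ∘ Sum.inl) + x • B (v ∘ Sum.inr) = 0
          rw [map_smul, ← smul_add]
          exact (congrArg (x • ·) hv).trans (smul_zero x)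
        · funext j
          cases j <;> rfl

end ColonSplittingSyzygy

section Reduce

variable {σ k : Type*} [CommRing k] {ι κ : Type} {c : ι → ℤ} {d : κ → ℤ} {x : MvPolynomial σ k}

namespace IsColonSplitting

variable {N L E : Submodule (MvPolynomial σ k) (κ → MvPolynomial σ k)}

lemma exists_eq_add_smul [Finite ι] (h : IsColonSplitting x N L E) (hx : homogComp 1 x = x)
    (hL : IsGradedSubmodule d L) (hE : IsGradedSubmodule d E)
    {φ : (ι → MvPolynomial σ k) →ₗ[MvPolynomial σ k] (κ → MvPolynomial σ k)}
    (hφ : IsGradedMap c d φ) (hrange : LinearMap.range φ ≤ N) :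
    ∃ A B : (ι → MvPolynomial σ k) →ₗ[MvPolynomial σ k] (κ → MvPolynomial σ k),
      IsGradedMap c d A ∧ IsGradedMap (fun j => c j - 1) d B ∧ φ = A + x • B ∧
        LinearMap.range A ≤ L ∧ LinearMap.range B ≤ E := by
  classical
  have := Fintype.ofFinite ι
  choose a ha b hb hab using fun j => h.mem_iff.1 (hrange ⟨Pi.single j 1, rfl⟩)
  obtain ⟨A, hA, hAa⟩ := exists_isGradedMap_apply_single (d := d)
    fun j => homogPart_homogPart d (c j) (a j)
  obtain ⟨B, hB, hBb⟩ := exists_isGradedMap_apply_single (d := d)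
    fun j => homogPart_homogPart d (c j - 1) (b j)
  refine ⟨A, B, hA, hB, LinearMap.pi_ext' fun j => LinearMap.ext_ring ?_,
    range_le_iff_single.2 fun j => by rw [hAa]; exact hL _ _ (ha j),
    range_le_iff_single.2 fun j => by rw [hBb]; exact hE _ _ (hb j)⟩
  change φ (Pi.single j 1) = A (Pi.single j 1) + x • B (Pi.single j 1)
  rw [hAa, hBb, ← homogPart_smul hx, ← map_add, hab, hφ, homogPart_single]

lemma range_eq_of_add_smul [Finite κ] (h : IsColonSplitting x N L E) (hx : homogComp 1 x = x)
    (hL : IsGradedSubmodule d L)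
    {A B : (ι → MvPolynomial σ k) →ₗ[MvPolynomial σ k] (κ → MvPolynomial σ k)}
    (hA : IsGradedMap c d A) (hrange : LinearMap.range (A + x • B) = N)
    (hAL : LinearMap.range A ≤ L) : LinearMap.range A = L := by
  refine le_antisymm hAL (hL.le_of_le_sup_map_lsmul hx hA.isGradedSubmodule_range fun v hv => ?_)
  obtain ⟨u, hu⟩ : v ∈ LinearMap.range (A + x • B) := hrange ▸ h.left_le hv
  have hBu : x • B u ∈ L := by
    rw [← hu] at hv
    exact (Submodule.add_mem_iff_right L (hAL ⟨u, rfl⟩)).1 hv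
  exact Submodule.mem_sup.2 ⟨_, ⟨u, rfl⟩, _, ⟨B u, h.mem_of_smul_mem _ hBu, rfl⟩, hu⟩

end IsColonSplitting

lemma isGradedQuotientEquiv_ker
    {A B : (ι → MvPolynomial σ k) →ₗ[MvPolynomial σ k] (κ → MvPolynomial σ k)}
    {α : (ι ⊕ ι → MvPolynomial σ k) →ₗ[MvPolynomial σ k] (ι → MvPolynomial σ k)}
    (hα : IsGradedMap (Sum.elim c c) c α) (hαA : (A + B) ∘ₗ α = coprodSum A B) :
    IsGradedQuotientEquiv c (Sum.elim c c) (LinearMap.ker (A + B)) (LinearMap.ker (coprodSum A B))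
      α (prodSum LinearMap.id LinearMap.id) where
  left_graded := hα
  right_graded := (IsGradedMap.id c).prodSum (IsGradedMap.id c)
  left_mem w hw := by rwa [LinearMap.mem_ker, ← LinearMap.comp_apply, hαA]
  right_mem v hv := hv
  left_right v := by
    rw [LinearMap.mem_ker, map_sub, ← LinearMap.comp_apply, hαA]
    exact sub_self ((A + B) v)
  right_left w := by
    rw [LinearMap.mem_ker, map_sub, ← LinearMap.congr_fun hαA w]
    exact sub_self ((A + B) (α w))

lemma HasResolutionBound.map_ker_coprodSum_add_smul [IsDomain k] [Finite ι]
    (hx : homogComp 1 x = x) (hx0 : x ≠ 0) {l : ℕ} {r : ℤ} (hc : ∀ j, c j ≤ r)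
    {A B : (ι → MvPolynomial σ k) →ₗ[MvPolynomial σ k] (κ → MvPolynomial σ k)}
    (hA : IsGradedMap c d A) (hB : IsGradedMap c d (x • B))
    (hAB : LinearMap.range (coprodSum A (x • B)) ≤ LinearMap.range (A + x • B))
    (hker : HasResolutionBound l r c (LinearMap.ker (A + x • B))) :
    HasResolutionBound l r (Sum.elim c fun j => c j - 1)
      ((LinearMap.ker (coprodSum A (x • B))).map
        (prodSum (LinearMap.funLeft _ _ Sum.inl) (x • LinearMap.funLeft _ _ Sum.inr))) := by
  obtain ⟨α, hα, hαA⟩ := (hA.add hB).exists_lift (hA.coprodSum hB) hAB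
  have bound := (isGradedQuotientEquiv_ker hα hαA).hasResolutionBound
    (fun j => (hc j).trans (by omega)) (Sum.rec hc hc) hker
  refine bound.map ?_ fun v _ hv => ?_
  · refine IsGradedMap.prodSum (fun _ _ => rfl) (IsGradedMap.smul hx fun a v => ?_)
    rfl
  · funext j
    cases j with
    | inl j => exact congrFun hv (Sum.inl j)
    | inr j => exact (mul_eq_zero.1 (congrFun hv (Sum.inr j))).resolve_left hx0

theorem IsColonSplitting.hasResolutionBound [IsDomain k] [Finite κ] (hx : homogComp 1 x = x)
    (hx0 : x ≠ 0) {N L E : Submodule (MvPolynomial σ k) (κ → MvPolynomial σ k)}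
    (h : IsColonSplitting x N L E) (hL : IsGradedSubmodule d L) (hE : IsGradedSubmodule d E)
    {l : ℕ} {r : ℤ} (hN : HasResolutionBound l r d N) : HasResolutionBound l r d E := by
  induction l generalizing r κ d with
  | zero => trivial
  | succ l ih =>
    obtain ⟨ι, hι, c, φ, hφ, hrange, hc, hker⟩ := hN
    obtain ⟨A, B, hA, hB, rfl, hAL, hBE⟩ := h.exists_eq_add_smul hx hL hE hφ hrange.le
    have hAL := h.range_eq_of_add_smul hx hL hA hrange hAL
    refine ⟨ι ⊕ ι, inferInstance, _, coprodSum A B, hA.coprodSum hB,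
      h.range_coprodSum_eq hrange hAL hBE, Sum.rec hc fun j => (by have := hc j; dsimp; omega), ?_⟩
    have hAB : LinearMap.range (coprodSum A (x • B)) ≤ LinearMap.range (A + x • B) := by
      rw [range_coprodSum, hrange]
      refine sup_le (hAL.le.trans h.left_le) ?_
      rintro _ ⟨w, rfl⟩
      exact h.smul_mem (hBE ⟨w, rfl⟩)
    have syzygies := isColonSplitting_ker_coprodSum (x := x) (A := A) (B := B)
      (fun a ha => (mul_eq_zero.1 ha).resolve_left hx0)
      (fun v hv => (smul_eq_zero.1 hv).resolve_left hx0)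
      (by rw [hAL]; exact fun w => h.mem_of_smul_mem _)
    refine ih syzygies ?_ (hA.coprodSum hB).isGradedSubmodule_ker
      (hker.map_ker_coprodSum_add_smul hx hx0 (fun j => (hc j).trans (by omega)) hA (hB.smul hx)
        hAB)
    exact ((IsGradedMap.id c).prodSum (IsGradedMap.zero c _)).isGradedSubmodule_map
      hA.isGradedSubmodule_ker

end Reduce

section MinimalCover

variable {R M P : Type*} [CommRing R] [AddCommGroup M] [Module R M] [AddCommGroup P] [Module R P]

/-- A splitting of `M → range f` exhibits `ker f` as the image of a projector of `M`, so
`ker f ≤ I • ⊤` improves to `ker f ≤ I • ker f`. -/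
lemma ker_eq_bot_of_projective_range [IsDomain R] [IsNoetherianRing R] [Module.Finite R M]
    [Module.IsTorsionFree R M] {f : M →ₗ[R] P} [Module.Projective R (LinearMap.range f)]
    {I : Ideal R} (hI : I ≠ ⊤) (hf : LinearMap.ker f ≤ I • ⊤) : LinearMap.ker f = ⊥ := by
  obtain ⟨s, hs⟩ := Module.projective_lifting_property f.rangeRestrict LinearMap.id
    f.surjective_rangeRestrict
  have f_section (y : LinearMap.range f) : f (s y) = y :=
    congrArg Subtype.val (LinearMap.congr_fun hs y)
  let p : M →ₗ[R] M := LinearMap.id - s ∘ₗ f.rangeRestrict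
  have range_p : LinearMap.range p ≤ LinearMap.ker f := by
    rintro _ ⟨v, rfl⟩
    change f (v - s (f.rangeRestrict v)) = 0
    rw [map_sub, f_section]
    exact sub_self (f v)
  have p_eq_self : ∀ v ∈ LinearMap.ker f, p v = v := by
    intro v hv
    have : f.rangeRestrict v = 0 := Subtype.ext hv
    change v - s (f.rangeRestrict v) = v
    rw [this, map_zero, sub_zero]
  have ker_le : LinearMap.ker f ≤ I • LinearMap.ker f := by
    intro v hv
    have hv' : p v ∈ (I • ⊤ : Submodule R M).map p := ⟨v, hf hv, rfl⟩
    rw [p_eq_self v hv, Submodule.map_smul'', ← LinearMap.range_eq_map] at hv'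
    exact smul_mono_right I range_p hv'
  have ker_le_pow (i : ℕ) : LinearMap.ker f ≤ I ^ i • ⊤ := by
    induction i with
    | zero => rw [pow_zero, Ideal.one_eq_top, Submodule.top_smul]; exact le_top
    | succ i ih =>
      rw [pow_succ', mul_smul]
      exact ker_le.trans (smul_mono_right I ih)
  rw [eq_bot_iff, ← Ideal.iInf_pow_smul_eq_bot_of_isTorsionFree I hI]
  exact le_iInf ker_le_pow

lemma apply_single_mem_range_of_ker {m : ℕ} {f : (Fin (m + 1) → R) →ₗ[R] M} {i : Fin (m + 1)}
    {w : Fin (m + 1) → R} (hw : f w = 0) (hi : w i = 1) {g : (Fin m → R) →ₗ[R] M}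
    (hg : ∀ j, g (Pi.single j 1) = f (Pi.single (i.succAbove j) 1)) :
    f (Pi.single i 1) ∈ LinearMap.range g := by
  have relation : f (Pi.single i 1) + ∑ j, w (i.succAbove j) • g (Pi.single j 1) = 0 := by
    simp only [hg, ← map_smul, ← map_sum, ← map_add]
    rw [← hw]
    conv_rhs => rw [pi_eq_sum_univ' w, Fin.sum_univ_succAbove _ i, hi, one_smul]
  rw [eq_neg_of_add_eq_zero_left relation]
  exact neg_mem (sum_mem fun j _ => Submodule.smul_mem _ _ ⟨_, rfl⟩)

end MinimalCover

section ExistsResolution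

variable {σ k : Type*} {ι : Type} {d : ι → ℤ}

lemma IsGradedSubmodule.exists_isGradedMap_range_eq [CommRing k] [IsNoetherianRing k] [Finite σ]
    [Finite ι] {N : Submodule (MvPolynomial σ k) (ι → MvPolynomial σ k)}
    (hN : IsGradedSubmodule d N) :
    ∃ (m : ℕ) (c : Fin m → ℤ)
      (φ : (Fin m → MvPolynomial σ k) →ₗ[MvPolynomial σ k] (ι → MvPolynomial σ k)),
      IsGradedMap c d φ ∧ LinearMap.range φ = N := by
  let T : Set (ι → MvPolynomial σ k) := {v | v ∈ N ∧ ∃ a, homogPart d a v = v}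
  have span_T : Submodule.span _ T = N :=
    le_antisymm (Submodule.span_le.2 fun _ hv => hv.1)
      (hN.le_of_forall_homogPart_mem fun a v hv hva => Submodule.subset_span ⟨hv, a, hva⟩)
  obtain ⟨t, htT, ht⟩ := (Submodule.fg_span_iff_fg_span_finset_subset T).1
    (IsNoetherian.noetherian (Submodule.span (MvPolynomial σ k) T))
  let w (j : Fin t.card) : ι → MvPolynomial σ k := t.equivFin.symm j
  choose c hc using fun j => (htT (t.equivFin.symm j).2).2
  obtain ⟨φ, hφ, hφw⟩ := exists_isGradedMap_apply_single (w := w) hc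
  refine ⟨t.card, c, φ, hφ, le_antisymm (range_le_iff_single.2 fun j => ?_) ?_⟩
  · rw [hφw]
    exact (htT (t.equivFin.symm j).2).1
  · rw [← span_T, ht, Submodule.span_le]
    intro v hv
    refine ⟨Pi.single (t.equivFin ⟨v, hv⟩) 1, ?_⟩
    rw [hφw]
    exact congrArg Subtype.val (t.equivFin.symm_apply_apply _)

lemma IsGradedSubmodule.exists_hasResolutionBound [CommRing k] [IsNoetherianRing k] [Finite σ]
    [Finite ι] {N : Submodule (MvPolynomial σ k) (ι → MvPolynomial σ k)}
    (hN : IsGradedSubmodule d N) (l : ℕ) : ∃ r, HasResolutionBound l r d N := by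
  induction l generalizing ι with
  | zero => exact ⟨0, trivial⟩
  | succ l ih =>
    obtain ⟨m, c, φ, hφ, hrange⟩ := hN.exists_isGradedMap_range_eq
    obtain ⟨r, hr⟩ := ih hφ.isGradedSubmodule_ker
    obtain ⟨s, hs⟩ := (Set.finite_range c).bddAbove
    exact ⟨max r s, Fin m, inferInstance, c, φ, hφ, hrange,
      fun j => (hs ⟨j, rfl⟩).trans (le_max_right r s), hr.mono (by omega)⟩

lemma HasResolutionBound.exists_fin [CommRing k]
    {N : Submodule (MvPolynomial σ k) (ι → MvPolynomial σ k)} {l : ℕ} {r : ℤ}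
    (h : HasResolutionBound (l + 1) r d N) :
    ∃ (m : ℕ) (c : Fin m → ℤ)
      (φ : (Fin m → MvPolynomial σ k) →ₗ[MvPolynomial σ k] (ι → MvPolynomial σ k)),
      IsGradedMap c d φ ∧ LinearMap.range φ = N ∧ (∀ j, c j ≤ r) ∧
        HasResolutionBound l (r + 1) c (LinearMap.ker φ) := by
  obtain ⟨κ, hκ, c, φ, hφ, hrange, hc, hker⟩ := h
  obtain ⟨m, ⟨e⟩⟩ := Finite.exists_equiv_fin κ
  let E := LinearEquiv.funCongrLeft (MvPolynomial σ k) (MvPolynomial σ k) e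
  refine ⟨m, c ∘ e.symm, φ ∘ₗ E.toLinearMap, hφ.comp ?_, ?_, fun j => hc _, ?_⟩
  · intro a v
    funext j
    change homogComp (a - c j) (v (e j)) = homogComp (a - c (e.symm (e j))) (v (e j))
    rw [e.symm_apply_apply]
  · rw [LinearMap.range_comp_of_range_eq_top φ E.range, hrange]
  · rw [LinearMap.ker_comp, Submodule.comap_equiv_eq_map_symm]
    exact hker.map (fun _ _ => rfl) fun v _ hv => E.symm.map_eq_zero_iff.1 hv

/-- A graded relation with a unit coefficient makes a generator superfluous. -/
lemma exists_isGradedMap_range_eq_ker_eq_bot [Field k] [Finite σ] {r : ℤ} {m : ℕ} {c : Fin m → ℤ}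
    {φ : (Fin m → MvPolynomial σ k) →ₗ[MvPolynomial σ k] (ι → MvPolynomial σ k)}
    (hφ : IsGradedMap c d φ) (hc : ∀ j, c j ≤ r)
    [Module.Projective (MvPolynomial σ k) (LinearMap.range φ)] :
    ∃ (m' : ℕ) (c' : Fin m' → ℤ)
      (φ' : (Fin m' → MvPolynomial σ k) →ₗ[MvPolynomial σ k] (ι → MvPolynomial σ k)),
      IsGradedMap c' d φ' ∧ LinearMap.range φ' = LinearMap.range φ ∧ (∀ j, c' j ≤ r) ∧
        LinearMap.ker φ' = ⊥ := by
  induction m with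
  | zero => exact ⟨0, c, φ, hφ, rfl, hc, Subsingleton.elim _ _⟩
  | succ m ih =>
    by_cases hmin : ∀ w ∈ LinearMap.ker φ, ∀ j, coeff 0 (w j) = 0
    · refine ⟨m + 1, c, φ, hφ, rfl, hc, ?_⟩
      refine ker_eq_bot_of_projective_range
        (RingHom.ker_ne_top (constantCoeff (R := k) (σ := σ))) ?_
      intro w hw
      rw [pi_eq_sum_univ w]
      exact sum_mem fun j _ => Submodule.smul_mem_smul (hmin w hw j) Submodule.mem_top
    · push Not at hmin
      obtain ⟨w, hw, i, hi⟩ := hmin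
      let w' := (C (coeff 0 (w i))⁻¹ : MvPolynomial σ k) • homogPart c (c i) w
      have hw' : φ w' = 0 := by
        rw [map_smul, ← hφ, LinearMap.mem_ker.1 hw, map_zero, smul_zero]
      have hi' : w' i = 1 := by
        change C _ * homogComp (c i - c i) (w i) = 1
        rw [sub_self, homogComp_zero, ← C_mul, inv_mul_cancel₀ hi, C_1]
      obtain ⟨φ', hφ', hsingle⟩ := exists_isGradedMap_apply_single
        (w := fun j => φ (Pi.single (i.succAbove j) 1)) (c := c ∘ i.succAbove) (d := d)
        fun j => isGradedMap_iff_single.1 hφ (i.succAbove j)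
      have range_eq : LinearMap.range φ' = LinearMap.range φ := by
        apply le_antisymm
        · exact range_le_iff_single.2 fun j => hsingle j ▸ ⟨_, rfl⟩
        · refine range_le_iff_single.2 fun j => ?_
          obtain rfl | ⟨j, rfl⟩ := i.eq_self_or_eq_succAbove j
          · exact apply_single_mem_range_of_ker hw' hi' hsingle
          · exact ⟨_, hsingle j⟩
      have : Module.Projective (MvPolynomial σ k) (LinearMap.range φ') := by rwa [range_eq]
      rw [← range_eq]
      exact ih hφ' fun j => hc _

end ExistsResolution

section ExactSequences

universe u v

/-- An exact sequence `⋯ → F₂ → F₁ → F₀` of graded free modules of finite rank with only finitely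
many nonzero terms, where `Fᵢ` is generated in degrees at most `r + i`. The map `F₁ → F₀` need
not be surjective. -/
structure BoundedExactSequence (σ k : Type*) [CommRing k] (r : ℤ) where
  length : ℕ
  rank : ℕ → ℕ
  rank_eq_zero : ∀ i, length ≤ i → rank i = 0
  twist : ∀ i, Fin (rank i) → ℤ
  twist_le : ∀ i j, twist i j ≤ r + i
  map : ∀ i, (Fin (rank (i + 1)) → MvPolynomial σ k) →ₗ[MvPolynomial σ k]
    (Fin (rank i) → MvPolynomial σ k)
  isGradedMap : ∀ i, IsGradedMap (twist (i + 1)) (twist i) (map i)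
  range_map : ∀ i, LinearMap.range (map (i + 1)) = LinearMap.ker (map i)

namespace BoundedExactSequence

variable {σ k : Type*} [CommRing k] {r : ℤ}

/-- The zero sequence. -/
noncomputable def nil (σ k : Type*) [CommRing k] (r : ℤ) : BoundedExactSequence σ k r where
  length := 0
  rank _ := 0
  rank_eq_zero _ _ := rfl
  twist _ := Fin.elim0
  twist_le _ := Fin.rec0
  map _ := 0
  isGradedMap _ := IsGradedMap.zero _ _
  range_map _ := Subsingleton.elim _ _

lemma range_map_nil {M : Type*} [AddCommGroup M] [Module (MvPolynomial σ k) M]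
    (φ : (Fin ((nil σ k r).rank 0) → MvPolynomial σ k) →ₗ[MvPolynomial σ k] M) :
    LinearMap.range ((nil σ k r).map 0) = LinearMap.ker φ := by
  have : IsEmpty (Fin ((nil σ k r).rank 0)) := Fin.isEmpty
  exact Subsingleton.elim _ _

/-- The extension of a sequence by a new last term `F₀` of rank `m`; the previous terms move up by
one. -/
def cons (X : BoundedExactSequence σ k (r + 1)) {m : ℕ} (c : Fin m → ℤ) (hc : ∀ j, c j ≤ r)
    (φ : (Fin (X.rank 0) → MvPolynomial σ k) →ₗ[MvPolynomial σ k] (Fin m → MvPolynomial σ k))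
    (hφ : IsGradedMap (X.twist 0) c φ) (hX : LinearMap.range (X.map 0) = LinearMap.ker φ) :
    BoundedExactSequence σ k r where
  length := X.length + 1
  rank i := Nat.casesOn i m X.rank
  rank_eq_zero
    | i + 1, hi => X.rank_eq_zero i (Nat.le_of_succ_le_succ hi)
  twist
    | 0 => c
    | i + 1 => X.twist i
  twist_le
    | 0, j => by simpa using hc j
    | i + 1, j => by
      have := X.twist_le i j
      push_cast
      omega
  map
    | 0 => φ
    | i + 1 => X.map i
  isGradedMap
    | 0 => hφ
    | i + 1 => X.isGradedMap i
  range_map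
    | 0 => hX
    | i + 1 => X.range_map i

end BoundedExactSequence

open CategoryTheory in
lemma hasProjectiveDimensionLT_ker_iff {R : Type u} [CommRing R] {M N : Type v} [AddCommGroup M]
    [Module R M] [AddCommGroup N] [Module R N] [Small.{v} R] [Module.Projective R M] {f : M →ₗ[R] N}
    (hf : Function.Surjective f) {l : ℕ} :
    HasProjectiveDimensionLT (ModuleCat.of R (LinearMap.ker f)) (l + 1) ↔
      HasProjectiveDimensionLT (ModuleCat.of R N) (l + 2) :=
  have : Projective (ModuleCat.of R M) := (IsProjective.iff_projective M).1 inferInstance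
  ((LinearMap.shortExact_shortComplexKer hf).hasProjectiveDimensionLT_X₃_iff l this).symm

open CategoryTheory in
theorem HasResolutionBound.exists_boundedExactSequence {σ k : Type*} [Field k] [Finite σ]
    {ι : Type} {d : ι → ℤ} {N : Submodule (MvPolynomial σ k) (ι → MvPolynomial σ k)} {l : ℕ} {r : ℤ}
    (h : HasResolutionBound (l + 1) r d N)
    (hN : HasProjectiveDimensionLT (ModuleCat.of (MvPolynomial σ k) N) (l + 1)) :
    ∃ (X : BoundedExactSequence σ k r)
      (φ : (Fin (X.rank 0) → MvPolynomial σ k) →ₗ[MvPolynomial σ k] (ι → MvPolynomial σ k)),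
      IsGradedMap (X.twist 0) d φ ∧ LinearMap.range φ = N ∧
        LinearMap.range (X.map 0) = LinearMap.ker φ := by
  induction l generalizing ι N r with
  | zero =>
    obtain ⟨m, c, φ, hφ, rfl, hc, -⟩ := h.exists_fin
    have : Projective (ModuleCat.of (MvPolynomial σ k) (LinearMap.range φ)) :=
      projective_iff_hasProjectiveDimensionLT_one.2 hN
    have := (IsProjective.iff_projective _).2 this
    obtain ⟨m', c', φ', hφ', hrange, hc', hker⟩ := exists_isGradedMap_range_eq_ker_eq_bot hφ hc
    refine ⟨(BoundedExactSequence.nil σ k (r + 1)).cons c' hc' 0 (IsGradedMap.zero _ _)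
      (BoundedExactSequence.range_map_nil 0), φ', hφ', hrange,
      LinearMap.range_zero.trans hker.symm⟩
  | succ l ih =>
    obtain ⟨m, c, φ, hφ, rfl, hc, hker⟩ := h.exists_fin
    obtain ⟨X, ψ, hψ, hrange, hX⟩ := ih hker (by
      rwa [← LinearMap.ker_rangeRestrict,
        hasProjectiveDimensionLT_ker_iff φ.surjective_rangeRestrict])
    exact ⟨X.cons c hc ψ hψ hX, φ, hφ, rfl, hrange⟩

end ExactSequences

section QuotientResolutions

/-- The ideal `J` as a submodule of the free module of rank one. -/
def rankOneSubmodule {R : Type*} [CommRing R] (J : Ideal R) : Submodule R (Fin 1 → R) :=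
  Submodule.comap (LinearMap.proj 0) J

lemma mem_rankOneSubmodule {R : Type*} [CommRing R] {J : Ideal R} {w : Fin 1 → R} :
    w ∈ rankOneSubmodule J ↔ w 0 ∈ J := Iff.rfl

lemma isGradedMap_mulVecLin_iff {σ k ι κ : Type*} [CommRing k] [Fintype ι] {c : ι → ℤ} {d : κ → ℤ}
    {A : Matrix κ ι (MvPolynomial σ k)} :
    IsGradedMap c d A.mulVecLin ↔ ∀ i j, homogComp (c j - d i) (A i j) = A i j := by
  classical
  simp only [isGradedMap_iff_single, Matrix.mulVecLin_apply, Matrix.mulVec_single_one,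
    funext_iff, homogPart_apply, Matrix.col_apply]
  exact forall_comm

variable {k : Type*} [Field k] {n : ℕ} {J : Ideal (MvPolynomial (Fin n) k)} {r : ℤ}

namespace GradedFreeRes

variable (F : GradedFreeRes J)

/-- The augmentation `F₀ → R/J` of a resolution, lifted to a map into `R = R¹`. -/
noncomputable def augmentation :
    (Fin (F.b 0) → MvPolynomial (Fin n) k) →ₗ[MvPolynomial (Fin n) k]
      (Fin 1 → MvPolynomial (Fin n) k) :=
  (Matrix.replicateRow (Fin 1) F.v).mulVecLin

lemma augmentation_apply_zero (w : Fin (F.b 0) → MvPolynomial (Fin n) k) :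
    F.augmentation w 0 = ∑ i, w i * F.v i :=
  dotProduct_comm F.v w

lemma isGradedMap_augmentation : IsGradedMap (F.D 0) 0 F.augmentation :=
  isGradedMap_mulVecLin_iff.2 fun _ j => by
    rw [Pi.zero_apply, sub_zero]
    exact homogOfDeg_iff.1 (F.hv j)

lemma isGradedMap_mulVecLin (i : ℕ) : IsGradedMap (F.D (i + 1)) (F.D i) (F.A i).mulVecLin :=
  isGradedMap_mulVecLin_iff.2 fun a b => homogOfDeg_iff.1 (F.hA i a b)

lemma mem_range_mulVecLin_zero_iff {w : Fin (F.b 0) → MvPolynomial (Fin n) k} :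
    w ∈ LinearMap.range (F.A 0).mulVecLin ↔ F.augmentation w ∈ rankOneSubmodule J := by
  rw [mem_rankOneSubmodule, augmentation_apply_zero, ← Ideal.Quotient.eq_zero_iff_mem]
  exact (F.hex0 w).symm

lemma exists_augmentation_sub_one_mem (hJ : IsGradedSubmodule 0 (rankOneSubmodule J)) :
    ∃ a, homogPart (F.D 0) 0 a = a ∧ F.augmentation a - 1 ∈ rankOneSubmodule J := by
  obtain ⟨w, hw⟩ := F.haug 1
  have hw : F.augmentation w - 1 ∈ rankOneSubmodule J := by
    rwa [mem_rankOneSubmodule, Pi.sub_apply, augmentation_apply_zero, Pi.one_apply,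
      ← Ideal.Quotient.mk_eq_mk_iff_sub_mem]
  have homogPart_one : homogPart 0 0 (1 : Fin 1 → MvPolynomial (Fin n) k) = 1 :=
    funext fun _ => homogComp_one
  refine ⟨homogPart (F.D 0) 0 w, homogPart_homogPart _ _ _, ?_⟩
  rw [← F.isGradedMap_augmentation, ← homogPart_one, ← map_sub]
  exact hJ 0 _ hw

lemma isGradedQuotientEquiv {a : Fin (F.b 0) → MvPolynomial (Fin n) k}
    (ha : homogPart (F.D 0) 0 a = a) (ha1 : F.augmentation a - 1 ∈ rankOneSubmodule J) :
    IsGradedQuotientEquiv (F.D 0) 0 (LinearMap.range (F.A 0).mulVecLin) (rankOneSubmodule J)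
      (Matrix.replicateCol (Fin 1) a).mulVecLin F.augmentation := by
  have left_apply (w) : (Matrix.replicateCol (Fin 1) a).mulVecLin w = w 0 • a := by
    funext i
    rw [Matrix.mulVecLin_apply, Matrix.mulVec, dotProduct, Fin.sum_univ_one,
      Matrix.replicateCol_apply, mul_comm]
    rfl
  have right_left (w) :
      w - F.augmentation ((Matrix.replicateCol (Fin 1) a).mulVecLin w) ∈ rankOneSubmodule J := by
    rw [left_apply, map_smul, mem_rankOneSubmodule]
    convert J.mul_mem_left (-w 0) (mem_rankOneSubmodule.1 ha1) using 1
    simp only [Pi.sub_apply, Pi.smul_apply, Pi.one_apply, smul_eq_mul]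
    ring
  refine
    { left_graded := isGradedMap_mulVecLin_iff.2 fun i _ => congrFun ha i
      right_graded := F.isGradedMap_augmentation
      left_mem := fun w hw => ?_
      right_mem := fun v hv => F.mem_range_mulVecLin_zero_iff.1 hv
      left_right := fun v => ?_
      right_left := right_left }
  · rw [mem_range_mulVecLin_zero_iff, ← Submodule.sub_mem_iff_right _ hw]
    exact right_left w
  · rw [mem_range_mulVecLin_zero_iff, map_sub, ← neg_mem_iff, neg_sub]
    exact right_left _

lemma hasResolutionBound_range (hF : ∀ i j, F.D i j - i ≤ r) (l i : ℕ) :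
    HasResolutionBound l (r + 1 + i) (F.D i) (LinearMap.range (F.A i).mulVecLin) := by
  induction l generalizing i with
  | zero => trivial
  | succ l ih =>
    refine ⟨_, inferInstance, F.D (i + 1), _, F.isGradedMap_mulVecLin i, rfl, fun j => ?_, ?_⟩
    · have := hF (i + 1) j
      push_cast at this
      omega
    · have ker_eq : LinearMap.ker (F.A i).mulVecLin = LinearMap.range (F.A (i + 1)).mulVecLin :=
        LinearMap.exact_iff.1 (F.hex i)
      rw [ker_eq, add_assoc]
      exact_mod_cast ih (i + 1)

/-- The generators of `F₀` are not all in negative degrees, since the augmentation hits `1`. -/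
lemma nonneg_of_sub_le (hJ : IsGradedSubmodule 0 (rankOneSubmodule J)) (htop : J ≠ ⊤)
    (hF : ∀ i j, F.D i j - i ≤ r) : 0 ≤ r := by
  by_contra hr
  have v_eq_zero (j) : F.v j = 0 := by
    have hj := hF 0 j
    rw [Nat.cast_zero, sub_zero] at hj
    rw [← homogOfDeg_iff.1 (F.hv j), homogComp_of_neg (by omega)]
  obtain ⟨a, -, ha⟩ := F.exists_augmentation_sub_one_mem hJ
  rw [mem_rankOneSubmodule, Pi.sub_apply, augmentation_apply_zero] at ha
  simp only [v_eq_zero, mul_zero, Finset.sum_const_zero, Pi.one_apply, zero_sub, neg_mem_iff] at ha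
  exact htop ((Ideal.eq_top_iff_one J).2 ha)

lemma hasResolutionBound (hJ : IsGradedSubmodule 0 (rankOneSubmodule J)) (htop : J ≠ ⊤)
    (hF : ∀ i j, F.D i j - i ≤ r) (l : ℕ) :
    HasResolutionBound l (r + 1) 0 (rankOneSubmodule J) := by
  obtain ⟨a, ha, ha1⟩ := F.exists_augmentation_sub_one_mem hJ
  have h0 := F.nonneg_of_sub_le hJ htop hF
  refine (F.isGradedQuotientEquiv ha ha1).hasResolutionBound (fun j => ?_) (fun _ => ?_)
    (by simpa using F.hasResolutionBound_range hF l 0)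
  · have := hF 0 j
    omega
  · exact h0.trans (by omega)

end GradedFreeRes

/-- The resolution of a quotient ring given by an exact sequence of graded free modules together
with an augmentation. -/
noncomputable def BoundedExactSequence.toGradedFreeRes (X : BoundedExactSequence (Fin n) k r)
    (v : Fin (X.rank 0) → MvPolynomial (Fin n) k) (hv : ∀ j, HomogOfDeg (v j) (X.twist 0 j))
    (hsurj : ∀ p, ∃ w : Fin (X.rank 0) → MvPolynomial (Fin n) k, ∑ j, w j * v j = p)
    (hrange : ∀ w, w ∈ LinearMap.range (X.map 0) ↔ ∑ j, w j * v j ∈ J) : GradedFreeRes J where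
  len := X.length
  b := X.rank
  hb i hi := X.rank_eq_zero i hi.le
  D := X.twist
  A i := LinearMap.toMatrix' (X.map i)
  v := v
  hv := hv
  hA i a b := by
    have h := X.isGradedMap i
    rw [← Matrix.toLin'_toMatrix' (X.map i), Matrix.toLin'_apply', isGradedMap_mulVecLin_iff] at h
    exact homogOfDeg_iff.2 (h a b)
  haug q := by
    obtain ⟨p, rfl⟩ := Ideal.Quotient.mk_surjective q
    obtain ⟨w, rfl⟩ := hsurj p
    exact ⟨w, rfl⟩
  hex0 w := by
    simp only [Ideal.Quotient.eq_zero_iff_mem, ← hrange, LinearMap.mem_range, Set.mem_range,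
      LinearMap.toMatrix'_mulVec]
  hex i w := by
    simp only [LinearMap.toMatrix'_mulVec, Set.mem_range, ← LinearMap.mem_range, X.range_map,
      LinearMap.mem_ker]

open CategoryTheory in
lemma exists_gradedFreeRes_of_hasResolutionBound {p : ℕ}
    (hp : HasProjectiveDimensionLT
      (ModuleCat.of (MvPolynomial (Fin n) k) (rankOneSubmodule J)) (p + 1)) (hr : 0 ≤ r)
    (h : HasResolutionBound (p + 1) (r + 1) 0 (rankOneSubmodule J)) :
    ∃ F : GradedFreeRes J, ∀ (i : ℕ) (j : Fin (F.b i)), F.D i j - (i : ℤ) ≤ r := by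
  obtain ⟨X, φ, hφ, hrange, hX⟩ := h.exists_boundedExactSequence hp
  let Y := X.cons 0 (fun _ => hr) φ hφ hX
  refine ⟨Y.toGradedFreeRes (fun _ => 1) (fun _ => homogOfDeg_iff.2 homogComp_one)
    (fun q => ⟨fun _ => q, ?_⟩) fun w => ?_, fun i j => sub_le_iff_le_add.2 (Y.twist_le i j)⟩
  · exact (Fin.sum_univ_one _).trans (mul_one q)
  · have sum_eq : ∑ j, w j * 1 = w (0 : Fin 1) := (Fin.sum_univ_one _).trans (mul_one _)
    rw [sum_eq]
    exact SetLike.ext_iff.1 hrange w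

end QuotientResolutions

section ProjectiveDimension

universe u v

open CategoryTheory in
lemma hasProjectiveDimensionLT_quotient_sup_range {R : Type u} [CommRing R]
    {M N : Type v} [AddCommGroup M] [Module R M] [AddCommGroup N] [Module R N] (φ : N →ₗ[R] M)
    (P : Submodule R M) {p : ℕ}
    (hN : HasProjectiveDimensionLT (ModuleCat.of R (N ⧸ P.comap φ)) p)
    (hM : HasProjectiveDimensionLT (ModuleCat.of R (M ⧸ P)) (p + 1)) :
    HasProjectiveDimensionLT (ModuleCat.of R (M ⧸ P ⊔ LinearMap.range φ)) (p + 1) := by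
  let f : N ⧸ P.comap φ →ₗ[R] M ⧸ P := Submodule.mapQ _ _ φ le_rfl
  have f_injective : Function.Injective f := by
    rw [← LinearMap.ker_eq_bot, Submodule.ker_mapQ, Submodule.mkQ_map_self]
  have le : P ≤ P ⊔ LinearMap.range φ := le_sup_left
  have exact : Function.Exact f (Submodule.factor le) := by
    rw [LinearMap.exact_iff, Submodule.factor, Submodule.ker_mapQ, Submodule.range_mapQ,
      Submodule.comap_id, Submodule.map_sup, Submodule.mkQ_map_self, bot_sup_eq]
  exact (ModuleCat.shortComplex_shortExact
    (ModuleCat.shortComplexOfCompEqZero _ _ exact.linearMap_comp_eq_zero) exact f_injective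
    (Submodule.factor_surjective le)).hasProjectiveDimensionLT_X₃ p hN hM

lemma comap_toSpanSingleton {R : Type*} [CommRing R] (I : Ideal R) (x : R) :
    Submodule.comap (LinearMap.toSpanSingleton R R x) I = I.colon {x} :=
  Ideal.ext fun _ => Submodule.mem_colon_singleton.symm

lemma colon_monomial_span_monomial {σ R : Type*} [CommRing R] (a : σ →₀ ℕ) (T : Set (σ →₀ ℕ)) :
    (Ideal.span ((fun m => monomial m (1 : R)) '' T)).colon {monomial a 1} =
      Ideal.span ((fun m => monomial m 1) '' ((· - a) '' T)) := by
  apply le_antisymm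
  · intro v hv
    refine mem_ideal_span_monomial_image.2 fun e he => ?_
    have add_mem_support : e + a ∈ (v * monomial a (1 : R)).support := by
      rwa [mem_support_iff, coeff_mul_monomial, mul_one, ← mem_support_iff]
    obtain ⟨t, ht, hle⟩ :=
      mem_ideal_span_monomial_image.1 (Submodule.mem_colon_singleton.1 hv) _ add_mem_support
    exact ⟨t - a, ⟨t, ht, rfl⟩, tsub_le_iff_right.2 hle⟩
  · refine Ideal.span_le.2 ?_
    rintro _ ⟨_, ⟨t, ht, rfl⟩, rfl⟩
    refine Submodule.mem_colon_singleton.2 ?_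
    rw [smul_eq_mul, monomial_mul, one_mul]
    exact monomial_mem_of_le le_tsub_add (Ideal.subset_span ⟨t, ht, rfl⟩)

open CategoryTheory in
lemma exists_hasProjectiveDimensionLT_quotient_span_monomial {σ R : Type*} [CommRing R]
    (T : Finset (σ →₀ ℕ)) :
    ∃ p, HasProjectiveDimensionLT (ModuleCat.of (MvPolynomial σ R)
      (MvPolynomial σ R ⧸ Ideal.span ((fun m => monomial m (1 : R)) '' (T : Set (σ →₀ ℕ))))) p := by
  classical
  induction hm : T.card using Nat.strong_induction_on generalizing T with | _ m ih
  subst hm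
  obtain rfl | ⟨a, ha⟩ := T.eq_empty_or_nonempty
  · refine ⟨1, projective_iff_hasProjectiveDimensionLT_one.1
      ((IsProjective.iff_projective _).1 (Module.Projective.of_equiv
        (Submodule.quotEquivOfEqBot _ ?_).symm))⟩
    rw [Finset.coe_empty, Set.image_empty, Ideal.span_empty]
  · have card_lt : (T.erase a).card < T.card := Finset.card_erase_lt_of_mem ha
    obtain ⟨p, hp⟩ := ih _ card_lt (T.erase a) rfl
    obtain ⟨q, hq⟩ := ih _ (Finset.card_image_le.trans_lt card_lt) ((T.erase a).image (· - a)) rfl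
    rw [Finset.coe_image, ← colon_monomial_span_monomial, ← comap_toSpanSingleton] at hq
    have span_eq : Ideal.span ((fun m => monomial m (1 : R)) '' (T : Set (σ →₀ ℕ))) =
        Ideal.span ((fun m => monomial m 1) '' (T.erase a : Set (σ →₀ ℕ))) ⊔
          LinearMap.range (LinearMap.toSpanSingleton (MvPolynomial σ R) _ (monomial a 1)) := by
      conv_lhs => rw [← Finset.insert_erase ha, Finset.coe_insert, Set.image_insert_eq]
      rw [LinearMap.range_toSpanSingleton, Ideal.submodule_span_eq, Ideal.span_insert, sup_comm]
    rw [span_eq]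
    exact ⟨max q p + 1, hasProjectiveDimensionLT_quotient_sup_range _ _
      (hasProjectiveDimensionLT_of_ge _ q _ (le_max_left q p))
      (hasProjectiveDimensionLT_of_ge _ p _ ((le_max_right q p).trans (Nat.le_succ _)))⟩

variable {k : Type*} [Field k] {n : ℕ} {J : Ideal (MvPolynomial (Fin n) k)}

lemma IsMonomialIdeal.exists_finset_span_eq (hJ : IsMonomialIdeal J) :
    ∃ T : Finset (Fin n →₀ ℕ), J = Ideal.span ((fun m => monomial m (1 : k)) '' T) := by
  classical
  obtain ⟨T, rfl⟩ := hJ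
  obtain ⟨s, hs, hspan⟩ :=
    (Submodule.fg_span_iff_fg_span_finset_subset _).1
      (IsNoetherian.noetherian (Ideal.span ((fun m => monomial m (1 : k)) '' T)))
  obtain ⟨T', -, rfl⟩ := Finset.subset_set_image_iff.1 hs
  exact ⟨T', hspan.trans (by rw [Finset.coe_image])⟩

open CategoryTheory in
lemma IsMonomialIdeal.exists_hasProjectiveDimensionLT (hJ : IsMonomialIdeal J) :
    ∃ p, HasProjectiveDimensionLT
      (ModuleCat.of (MvPolynomial (Fin n) k) (rankOneSubmodule J)) (p + 1) := by
  obtain ⟨T, hT⟩ := hJ.exists_finset_span_eq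
  obtain ⟨p, hp⟩ := exists_hasProjectiveDimensionLT_quotient_span_monomial (R := k) T
  rw [← hT] at hp
  let f : (Fin 1 → MvPolynomial (Fin n) k) →ₗ[MvPolynomial (Fin n) k] _ :=
    J.mkQ ∘ₗ LinearMap.proj 0
  have hf : Function.Surjective f :=
    J.mkQ_surjective.comp (LinearMap.proj_surjective 0)
  have ker_f : LinearMap.ker f = rankOneSubmodule J := by
    rw [LinearMap.ker_comp, Submodule.ker_mkQ, rankOneSubmodule]
  rw [← ker_f]
  exact ⟨p, (hasProjectiveDimensionLT_ker_iff hf).2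
    (hasProjectiveDimensionLT_of_ge _ p _ (by omega))⟩

lemma IsMonomialIdeal.isGradedSubmodule_rankOneSubmodule (hJ : IsMonomialIdeal J) :
    IsGradedSubmodule 0 (rankOneSubmodule J) := by
  intro d v hv
  refine mem_of_forall_monomial_mem fun e he =>
    hJ.monomial_mem hv (mem_support_iff.2 fun (h0 : coeff e (v 0) = 0) => ?_)
  change e ∈ (homogComp (d - 0) (v 0)).support at he
  rw [mem_support_iff, coeff_homogComp, h0, ite_self] at he
  exact he rfl

end ProjectiveDimension

section MonomialColon

variable {k : Type*} [Field k] {n : ℕ} {I J L N : Ideal (MvPolynomial (Fin n) k)}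

lemma IsColonSplitting.rankOneSubmodule {R : Type*} [CommRing R] {x : R} {N L E : Ideal R}
    (h : IsColonSplitting x N L E) :
    IsColonSplitting x (rankOneSubmodule N) (rankOneSubmodule L) (rankOneSubmodule E) where
  le := fun _ hv => h.le hv
  mem_of_smul_mem := fun v => h.mem_of_smul_mem (v 0)
  eq_sup := by
    apply le_antisymm
    · intro v hv
      obtain ⟨l, hl, e, he, hv⟩ := h.mem_iff.1 hv
      refine Submodule.mem_sup.2 ⟨fun _ => l, hl, _, ⟨fun _ => e, he, rfl⟩, ?_⟩
      funext i
      rw [Subsingleton.elim i 0]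
      exact hv
    · refine sup_le (fun v hv => h.left_le hv) ?_
      rintro _ ⟨v, hv, rfl⟩
      exact h.smul_mem hv

lemma IsColonSplitting.regQuot_le {x : MvPolynomial (Fin n) k} (h : IsColonSplitting x N L I)
    (hx : homogComp 1 x = x) (hx0 : x ≠ 0) (hN : IsMonomialIdeal N) (hL : IsMonomialIdeal L)
    (hI : IsMonomialIdeal I) (htop : I ≠ ⊤) : regQuot I ≤ regQuot N := by
  have hI' := hI.isGradedSubmodule_rankOneSubmodule
  have hN' := hN.isGradedSubmodule_rankOneSubmodule
  have N_ne_top : N ≠ ⊤ := ne_top_of_le_ne_top htop h.le_right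
  apply csInf_le_csInf
  · exact ⟨0, fun r ⟨F, hF⟩ => F.nonneg_of_sub_le hI' htop hF⟩
  · obtain ⟨p, hp⟩ := hN.exists_hasProjectiveDimensionLT
    obtain ⟨r, hr⟩ := hN'.exists_hasResolutionBound (p + 1)
    exact ⟨max r 0, exists_gradedFreeRes_of_hasResolutionBound hp (le_max_right r 0)
      (hr.mono ((le_max_left r 0).trans (Int.le_add_one le_rfl)))⟩
  · rintro r ⟨F, hF⟩
    obtain ⟨p, hp⟩ := hI.exists_hasProjectiveDimensionLT
    exact exists_gradedFreeRes_of_hasResolutionBound hp (F.nonneg_of_sub_le hN' N_ne_top hF)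
      (h.rankOneSubmodule.hasResolutionBound hx hx0 hL.isGradedSubmodule_rankOneSubmodule hI'
        (F.hasResolutionBound hN' N_ne_top hF (p + 1)))

lemma monomial_mem_colon_monomial_iff {σ R : Type*} [CommSemiring R] {J : Ideal (MvPolynomial σ R)}
    {a e : σ →₀ ℕ} :
    monomial e (1 : R) ∈ J.colon {monomial a 1} ↔ monomial (e + a) (1 : R) ∈ J := by
  rw [Submodule.mem_colon_singleton, smul_eq_mul, monomial_mul, one_mul]

namespace IsMonomialIdeal

lemma colon_monomial (hJ : IsMonomialIdeal J) (a : Fin n →₀ ℕ) :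
    IsMonomialIdeal (J.colon {monomial a 1}) := by
  obtain ⟨T, rfl⟩ := hJ
  exact ⟨_, colon_monomial_span_monomial a T⟩

lemma colon_X (hJ : IsMonomialIdeal J) (i : Fin n) : IsMonomialIdeal (J.colon {X i}) :=
  hJ.colon_monomial _

lemma isColonSplitting_X (hJ : IsMonomialIdeal J) (i : Fin n) :
    IsColonSplitting (X i) J
      (Ideal.span ((fun e => monomial e (1 : k)) '' {e | monomial e (1 : k) ∈ J ∧ e i = 0}))
      (J.colon {X i}) where
  le := (Ideal.span_le.2 (by rintro _ ⟨e, he, rfl⟩; exact he.1)).trans Ideal.le_colon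
  mem_of_smul_mem := fun v hv => by
    refine mem_ideal_span_monomial_image.2 fun e he => ?_
    obtain ⟨d, hd, hle⟩ := mem_ideal_span_monomial_image.1 hv (Finsupp.single i 1 + e) (by
      rw [smul_eq_mul, mem_support_iff, coeff_X_mul]; exact mem_support_iff.1 he)
    refine ⟨d, hd, fun j => ?_⟩
    obtain rfl | hj := eq_or_ne j i
    · exact hd.2.trans_le (Nat.zero_le _)
    · simpa [Finsupp.single_eq_of_ne hj] using hle j
  eq_sup := by
    apply le_antisymm
    · refine fun p hp => mem_of_forall_monomial_mem fun e he => ?_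
      have e_mem := hJ.monomial_mem hp he
      obtain hi | hi := eq_or_ne (e i) 0
      · exact Ideal.mem_sup_left (Ideal.subset_span ⟨e, ⟨e_mem, hi⟩, rfl⟩)
      · have single_le : Finsupp.single i 1 ≤ e := Finsupp.single_le_iff.2 (by omega)
        refine Ideal.mem_sup_right ⟨monomial (e - Finsupp.single i 1) 1, ?_, ?_⟩
        · rwa [SetLike.mem_coe, X, monomial_mem_colon_monomial_iff, tsub_add_cancel_of_le single_le]
        · rw [LinearMap.lsmul_apply, smul_eq_mul, X, monomial_mul, one_mul,
            add_tsub_cancel_of_le single_le]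
    · refine sup_le (Ideal.span_le.2 (by rintro _ ⟨e, he, rfl⟩; exact he.1)) ?_
      rintro _ ⟨v, hv, rfl⟩
      rw [LinearMap.lsmul_apply, smul_eq_mul, mul_comm]
      exact Submodule.mem_colon_singleton.1 hv

lemma pdepth_le_colon_X (hJ : IsMonomialIdeal J) (i : Fin n) (htop : J.colon {X i} ≠ ⊤) :
    pdepth J ≤ pdepth (J.colon {X i}) :=
  (hJ.isColonSplitting_X i).pdepth_le (Ideal.subset_span ⟨i, rfl⟩) ((hJ.colon_X i).le_mxIdeal htop)

lemma regQuot_colon_X_le (hJ : IsMonomialIdeal J) (i : Fin n) (htop : J.colon {X i} ≠ ⊤) :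
    regQuot (J.colon {X i}) ≤ regQuot J :=
  (hJ.isColonSplitting_X i).regQuot_le (homogComp_X i) (X_ne_zero i) hJ ⟨_, rfl⟩
    (hJ.colon_X i) htop

theorem pdepth_le_and_regQuot_le_colon_monomial (hJ : IsMonomialIdeal J) (a : Fin n →₀ ℕ)
    (htop : J.colon {monomial a 1} ≠ ⊤) :
    pdepth J ≤ pdepth (J.colon {monomial a 1}) ∧ regQuot (J.colon {monomial a 1}) ≤ regQuot J := by
  induction hd : a.degree generalizing a J with
  | zero =>
    have colon_eq : J.colon {monomial a 1} = J := by
      refine (hJ.colon_monomial a).ext hJ fun e => ?_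
      rw [monomial_mem_colon_monomial_iff, Finsupp.degree_eq_zero_iff a |>.1 hd, add_zero]
    rw [colon_eq]
    exact ⟨le_rfl, le_rfl⟩
  | succ d ih =>
    obtain ⟨i, hi⟩ : ∃ i, a i ≠ 0 := by
      by_contra! h
      exact absurd hd (by simp [show a = 0 from Finsupp.ext h])
    obtain ⟨b, rfl⟩ := exists_add_of_le (Finsupp.single_le_iff.2 (Nat.one_le_iff_ne_zero.2 hi))
    have colon_colon : (J.colon {X i}).colon {monomial b 1} =
        J.colon {monomial (Finsupp.single i 1 + b) 1} := by
      refine ((hJ.colon_X i).colon_monomial b).ext (hJ.colon_monomial _) fun e => ?_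
      rw [monomial_mem_colon_monomial_iff, X, monomial_mem_colon_monomial_iff,
        monomial_mem_colon_monomial_iff, add_assoc, add_comm b]
    rw [← colon_colon] at htop ⊢
    have colon_X_ne_top := ne_top_of_le_ne_top htop Ideal.le_colon
    obtain ⟨depth_le, reg_le⟩ := ih (hJ.colon_X i) b htop (by
      rwa [map_add, Finsupp.degree_single, add_comm, Nat.add_right_cancel_iff] at hd)
    exact ⟨(hJ.pdepth_le_colon_X i colon_X_ne_top).trans depth_le,
      reg_le.trans (hJ.regQuot_colon_X_le i colon_X_ne_top)⟩

theorem pdepth_le_and_regQuot_le (hJ : IsMonomialIdeal J) (hI : IsMonomialIdeal I) (htop : I ≠ ⊤)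
    (a : Fin n →₀ ℕ) (h : ∀ e, monomial (e + a) (1 : k) ∈ J ↔ monomial e (1 : k) ∈ I) :
    pdepth J ≤ pdepth I ∧ regQuot I ≤ regQuot J := by
  have colon_eq : J.colon {monomial a 1} = I :=
    (hJ.colon_monomial a).ext hI fun e => monomial_mem_colon_monomial_iff.trans (h e)
  subst colon_eq
  exact hJ.pdepth_le_and_regQuot_le_colon_monomial a htop

end IsMonomialIdeal

end MonomialColon

/-- **Theorem.** Let `I` be the edge ideal of a hypergraph which contains a good leaf. Then
(i) the functions `t ↦ depth R/I^t` and `t ↦ depth R/\overline{I^t}` are non-increasing for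
`t ≥ 1`, and (ii) the functions `t ↦ reg R/I^t` and `t ↦ reg R/\overline{I^t}` are
non-decreasing for `t ≥ 1`. -/
theorem depth_reg_powers_good_leaf {k : Type*} [Field k] {n : ℕ}
    (E : Set (Finset (Fin n))) (hgl : ∃ F : Finset (Fin n), IsGoodLeaf E F)
    (I : Ideal (MvPolynomial (Fin n) k)) (hI : I = edgeIdealH k E) :
    ∀ t : ℕ, 1 ≤ t →
      (pdepth (I ^ (t + 1)) ≤ pdepth (I ^ t) ∧
        pdepth (intClos (I ^ (t + 1))) ≤ pdepth (intClos (I ^ t))) ∧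
      (regQuot (I ^ t) ≤ regQuot (I ^ (t + 1)) ∧
        regQuot (intClos (I ^ t)) ≤ regQuot (intClos (I ^ (t + 1)))) := by
  intro t ht
  by_cases htop : I = ⊤
  · simp only [htop, Ideal.top_pow, le_refl, and_self]
  subst hI
  obtain ⟨F, hF⟩ := hgl
  have hI (s : ℕ) : IsMonomialIdeal (edgeIdealH k E ^ s) := isMonomialIdeal_edgeIdealH.pow s
  have pow_ne_top : edgeIdealH k E ^ t ≠ ⊤ :=
    ne_top_of_le_ne_top htop (Ideal.pow_le_self (by omega))
  obtain ⟨depth_le, reg_le⟩ := (hI (t + 1)).pdepth_le_and_regQuot_le (hI t) pow_ne_top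
    (edgeExponent F) fun e => by
      simpa only [one_nsmul] using hF.monomial_add_nsmul_mem_pow_iff (t := t) (j := 1) (e := e)
  obtain ⟨depth_intClos_le, reg_intClos_le⟩ :=
    (hI (t + 1)).intClos.pdepth_le_and_regQuot_le (hI t).intClos
      ((hI t).intClos_ne_top pow_ne_top) (edgeExponent F)
      fun _ => hF.monomial_add_mem_intClos_pow_iff
  exact ⟨⟨depth_le, depth_intClos_le⟩, reg_le, reg_intClos_le⟩
end

section
/- Let R be a positively graded algebra over a field, let I ⊆ R be a graded ideal, and let f ∈ R be a nonzero form that is a non-zerodivisor on R/I^t for all t ≤ s. Then depth R/(I,f)^s = min_{1 ≤ t ≤ s} depth R/I^t − 1. -/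
/-!
The ring `R` may be replaced by a finite module `M`. Write `J = I + (f)`. Multiplication by `f`
gives a short exact sequence `0 → M/JˢM → M/Jˢ⁺¹M → M/(Iˢ⁺¹M + fM) → 0`, and `f` is regular on
`M/Iˢ⁺¹M`, so the last term has depth `depth M/Iˢ⁺¹M - 1`. By the theorem of Rees, depth is read
off from the vanishing of `Ext(R/𝔪, -)`, and the depth of the middle term turns out to be the
minimum of the two outer depths: the sequence receives a map from
`0 → M/Iˢ⁺¹M → M/Iˢ⁺¹M → M/(Iˢ⁺¹M + fM) → 0` which is the identity on the right and factors on the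
left through `M/IˢM`. By induction the depth of `M/IˢM` exceeds that of `M/JˢM`, so the connecting
maps vanish one degree beyond what the long exact sequence alone would give.
-/

open CategoryTheory CategoryTheory.Abelian

universe w v u

section ExtVanishing

variable {C : Type u} [Category.{v} C] [Abelian C] [HasExt.{w} C]

/-- The vanishing of `Extⁱ(N, M)` for all `i < n`. For `N = R/J` and `M` a finite module with
`JM ≠ M` over a Noetherian ring `R`, this says that `M` has depth at least `n` with respect to
`J`. -/
def ExtVanishesBelow (N M : C) (n : ℕ) : Prop :=
  ∀ i < n, Subsingleton (Ext N M i)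

namespace ExtVanishesBelow

variable {N M : C} {m n : ℕ}

lemma mono (h : ExtVanishesBelow N M n) (hmn : m ≤ n) : ExtVanishesBelow N M m :=
  fun i hi ↦ h i (hi.trans_le hmn)

lemma zero : ExtVanishesBelow N M 0 :=
  fun _ hi ↦ absurd hi (Nat.not_lt_zero _)

lemma of_isZero (hM : Limits.IsZero M) : ExtVanishesBelow N M n :=
  fun i _ ↦ subsingleton_of_forall_eq 0 fun x ↦ by
    rw [← x.comp_mk₀_id, hM.eq_of_src (𝟙 M) 0, Ext.mk₀_zero, Ext.comp_zero]

lemma of_iso {M' : C} (e : M ≅ M') (h : ExtVanishesBelow N M n) : ExtVanishesBelow N M' n :=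
  fun i hi ↦ subsingleton_of_forall_eq 0 fun x ↦ by
    obtain ⟨y, rfl⟩ : ∃ y : Ext N M i, y.comp (Ext.mk₀ e.hom) (add_zero i) = x :=
      ⟨x.comp (Ext.mk₀ e.inv) (add_zero i), by simp⟩
    rw [(h i hi).elim y 0, Ext.zero_comp]

variable {S T : ShortComplex C} (hS : S.ShortExact) (hT : T.ShortExact)

include hS

lemma X₂ (h₁ : ExtVanishesBelow N S.X₁ n) (h₃ : ExtVanishesBelow N S.X₃ n) :
    ExtVanishesBelow N S.X₂ n := fun i hi ↦
  subsingleton_of_forall_eq 0 fun x ↦ by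
    obtain ⟨y, rfl⟩ := Ext.covariant_sequence_exact₂ N hS x ((h₃ i hi).elim _ _)
    rw [(h₁ i hi).elim y 0, Ext.zero_comp]

lemma X₃ (h₂ : ExtVanishesBelow N S.X₂ n) (h₁ : ExtVanishesBelow N S.X₁ (n + 1)) :
    ExtVanishesBelow N S.X₃ n := fun i hi ↦
  subsingleton_of_forall_eq 0 fun x ↦ by
    obtain ⟨y, rfl⟩ := Ext.covariant_sequence_exact₃ N hS x rfl ((h₁ (i + 1) (by lia)).elim _ _)
    rw [(h₂ i hi).elim y 0, Ext.zero_comp]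

lemma X₁_of_comp_eq_zero (h₃ : ExtVanishesBelow N S.X₃ n)
    (hf : ∀ i < n + 1, ∀ x : Ext N S.X₁ i, x.comp (Ext.mk₀ S.f) (add_zero i) = 0) :
    ExtVanishesBelow N S.X₁ (n + 1) := fun i hi ↦
  subsingleton_of_forall_eq 0 fun x ↦ by
    cases i with
    | zero =>
      have := hS.mono_f
      exact Ext.postcomp_mk₀_injective_of_mono N S.f ((hf 0 hi x).trans (map_zero _).symm)
    | succ i =>
      obtain ⟨y, rfl⟩ := Ext.covariant_sequence_exact₁ N hS x (hf _ hi x) rfl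
      rw [(h₃ i (by lia)).elim y 0, Ext.zero_comp]

lemma X₁ (h₃ : ExtVanishesBelow N S.X₃ n) (h₂ : ExtVanishesBelow N S.X₂ (n + 1)) :
    ExtVanishesBelow N S.X₁ (n + 1) :=
  X₁_of_comp_eq_zero hS h₃ fun i hi _ ↦ (h₂ i hi).elim _ _

include hT

/-- By naturality the connecting map of `T` factors through `Extⁱ⁺¹(N, X) = 0`. -/
lemma X₃_of_factors (φ : S ⟶ T) [IsIso φ.τ₃] {X : C} {a : S.X₁ ⟶ X} {b : X ⟶ T.X₁}
    (hab : a ≫ b = φ.τ₁) (h₂ : ExtVanishesBelow N T.X₂ n) (hX : ExtVanishesBelow N X (n + 1)) :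
    ExtVanishesBelow N T.X₃ n := fun i hi ↦
  subsingleton_of_forall_eq 0 fun x ↦ by
    have hx : x.comp hT.extClass rfl = 0 := by
      obtain ⟨y, rfl⟩ : ∃ y : Ext N S.X₃ i, y.comp (Ext.mk₀ φ.τ₃) (add_zero i) = x :=
        ⟨x.comp (Ext.mk₀ (inv φ.τ₃)) (add_zero i), by simp⟩
      have hya : (y.comp hS.extClass rfl).comp (Ext.mk₀ a) (add_zero (i + 1)) = 0 :=
        (hX (i + 1) (by lia)).elim _ _
      rw [Ext.comp_assoc_of_second_deg_zero, ← hS.extClass_naturality hT φ,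
        ← Ext.comp_assoc_of_third_deg_zero, ← hab, ← Ext.mk₀_comp_mk₀,
        ← Ext.comp_assoc_of_third_deg_zero, hya, Ext.zero_comp]
    obtain ⟨y, rfl⟩ := Ext.covariant_sequence_exact₃ N hT x rfl hx
    rw [(h₂ i hi).elim y 0, Ext.zero_comp]

lemma X₂_iff_of_factors (φ : S ⟶ T) [IsIso φ.τ₃] {X : C} {a : S.X₁ ⟶ X} {b : X ⟶ T.X₁}
    (hab : a ≫ b = φ.τ₁)
    (hX : ∀ n, ExtVanishesBelow N T.X₁ n → ExtVanishesBelow N X (n + 1)) :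
    ExtVanishesBelow N T.X₂ n ↔ ExtVanishesBelow N T.X₁ n ∧ ExtVanishesBelow N T.X₃ n := by
  refine ⟨fun h₂ ↦ ?_, fun h ↦ X₂ hT h.1 h.2⟩
  induction n with
  | zero => exact ⟨zero, zero⟩
  | succ n ih =>
    have h₁ : ExtVanishesBelow N T.X₁ (n + 1) := X₁ hT (ih (h₂.mono n.le_succ)).2 h₂
    exact ⟨h₁, X₃_of_factors hS hT φ hab h₂ (hX _ h₁)⟩

end ExtVanishesBelow

end ExtVanishing

section QuotientMul

variable {R : Type u} [CommRing R] {M : Type v} [AddCommGroup M] [Module R M]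
  {f : R} {A B C : Submodule R M}

open Submodule LinearMap

lemma exact_mapQ_lsmul_factor (hA : B.comap (lsmul R M f) = A) (hC : B ⊔ range (lsmul R M f) = C) :
    Function.Exact (A.mapQ B (lsmul R M f) hA.ge) (factor (hC ▸ le_sup_left : B ≤ C)) := by
  rw [exact_iff, ker_mapQ, range_mapQ, comap_id, ← hC, Submodule.map_sup, mkQ_map_self, bot_sup_eq]

/-- The complex `0 → M/A → M/B → M/C → 0` whose first map is multiplication by `f`, for
`A = (B :_M f)` and `C = B + fM`. The three submodules are independent variables so that complexes
with propositionally equal terms can share them. -/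
abbrev quotientMulComplex (hA : B.comap (lsmul R M f) = A) (hC : B ⊔ range (lsmul R M f) = C) :
    ShortComplex (ModuleCat.{v} R) :=
  ModuleCat.shortComplexOfCompEqZero (A.mapQ B (lsmul R M f) hA.ge)
    (factor (hC ▸ le_sup_left : B ≤ C)) (exact_mapQ_lsmul_factor hA hC).linearMap_comp_eq_zero

lemma quotientMulComplex_shortExact (hA : B.comap (lsmul R M f) = A)
    (hC : B ⊔ range (lsmul R M f) = C) : (quotientMulComplex hA hC).ShortExact := by
  have hinj : Function.Injective (A.mapQ B (lsmul R M f) hA.ge) := by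
    subst hA
    exact ker_eq_bot.mp ((ker_mapQ ..).trans (mkQ_map_self _))
  exact ModuleCat.shortComplex_shortExact _ (exact_mapQ_lsmul_factor hA hC) hinj
    (factor_surjective (hC ▸ le_sup_left))

/-- For `B ≤ B'`, the map `(M/A → M/B → M/C) ⟶ (M/A' → M/B' → M/C)` induced by the identity of
the module `M`. -/
def quotientMulComplexMap {A' B' : Submodule R M} (hA : B.comap (lsmul R M f) = A)
    (hC : B ⊔ range (lsmul R M f) = C) (hA' : B'.comap (lsmul R M f) = A')
    (hC' : B' ⊔ range (lsmul R M f) = C) (hB : B ≤ B') :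
    quotientMulComplex hA hC ⟶ quotientMulComplex hA' hC' where
  τ₁ := ModuleCat.ofHom (factor (hA ▸ hA' ▸ comap_mono hB : A ≤ A'))
  τ₂ := ModuleCat.ofHom (factor hB)
  τ₃ := 𝟙 _
  comm₁₂ := by ext; rfl
  comm₂₃ := by ext; rfl

lemma ext_comp_mk₀_smul_id_eq_zero [Small.{v} R] {N L : ModuleCat.{v} R}
    (hf : f ∈ Module.annihilator R N) {i : ℕ} (x : Ext N L i) :
    x.comp (Ext.mk₀ (f • 𝟙 L)) (add_zero i) = 0 :=
  DFunLike.congr_fun (congrArg AddCommGrpCat.Hom.hom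
    (Ext.postcomp_smul_id_eq_zero_of_mem_annihilator hf i)) x

lemma extVanishesBelow_quotient_succ_iff [Small.{v} R] {N : ModuleCat.{v} R}
    (hf : f ∈ Module.annihilator R N) (hA : A.comap (lsmul R M f) = A)
    (hC : A ⊔ range (lsmul R M f) = C) {n : ℕ} :
    ExtVanishesBelow N (ModuleCat.of R (M ⧸ A)) (n + 1) ↔
      ExtVanishesBelow N (ModuleCat.of R (M ⧸ C)) n := by
  have hS := quotientMulComplex_shortExact hA hC
  have hmul : (quotientMulComplex hA hC).f = f • 𝟙 (ModuleCat.of R (M ⧸ A)) := by ext; rfl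
  refine ⟨fun h ↦ .X₃ hS (h.mono n.le_succ) h, fun h ↦ .X₁_of_comp_eq_zero hS h fun i _ x ↦ ?_⟩
  rw [hmul]
  exact ext_comp_mk₀_smul_id_eq_zero hf x

end QuotientMul

section PowerFiltration

lemma ideal_sup_pow_succ {R : Type*} [CommSemiring R] (I K : Ideal R) (s : ℕ) :
    (I ⊔ K) ^ (s + 1) = I ^ (s + 1) ⊔ K * (I ⊔ K) ^ s := by
  induction s with
  | zero => simp
  | succ s ih =>
    have hIK : I * (K * (I ⊔ K) ^ s) ≤ K * (I ⊔ K) ^ (s + 1) := by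
      rw [mul_left_comm, pow_succ']
      gcongr
      exact le_sup_left
    calc (I ⊔ K) ^ (s + 2)
        = I * (I ⊔ K) ^ (s + 1) ⊔ K * (I ⊔ K) ^ (s + 1) := by rw [pow_succ', Ideal.sup_mul]
      _ = I ^ (s + 2) ⊔ (I * (K * (I ⊔ K) ^ s) ⊔ K * (I ⊔ K) ^ (s + 1)) := by
        conv_lhs => enter [1]; rw [ih, Ideal.mul_sup, ← pow_succ']
        rw [sup_assoc]
      _ = I ^ (s + 2) ⊔ K * (I ⊔ K) ^ (s + 1) := by rw [sup_eq_right.mpr hIK]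

variable {R : Type u} [CommRing R] {M : Type v} [AddCommGroup M] [Module R M]

open Submodule LinearMap

lemma sup_span_singleton_pow_succ_smul_top (I : Ideal R) (f : R) (s : ℕ) :
    (I ⊔ Ideal.span {f}) ^ (s + 1) • (⊤ : Submodule R M) =
      I ^ (s + 1) • ⊤ ⊔ ((I ⊔ Ideal.span {f}) ^ s • (⊤ : Submodule R M)).map (lsmul R M f) := by
  rw [ideal_sup_pow_succ, Submodule.sup_smul, Submodule.mul_smul, ideal_span_singleton_smul]
  rfl

lemma comap_sup_map {M' : Type*} [AddCommGroup M'] [Module R M'] (g : M →ₗ[R] M')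
    (P : Submodule R M') (Q : Submodule R M) : (P ⊔ Q.map g).comap g = P.comap g ⊔ Q := by
  refine le_antisymm (fun x hx ↦ ?_) (sup_le (comap_mono le_sup_left) ?_)
  · obtain ⟨p, hp, -, ⟨q, hq, rfl⟩, hpq⟩ := mem_sup.mp hx
    have hxq : g (x - q) ∈ P := by rwa [map_sub, ← hpq, add_sub_cancel_right]
    exact mem_sup.mpr ⟨x - q, hxq, q, hq, sub_add_cancel x q⟩
  · exact map_le_iff_le_comap.mp le_sup_right

variable {I : Ideal R} {f : R} {s : ℕ}

lemma comap_lsmul_sup_span_singleton_pow_succ_smul_top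
    (hf : IsSMulRegular (M ⧸ I ^ (s + 1) • (⊤ : Submodule R M)) f) :
    ((I ⊔ Ideal.span {f}) ^ (s + 1) • (⊤ : Submodule R M)).comap (lsmul R M f) =
      (I ⊔ Ideal.span {f}) ^ s • ⊤ := by
  have hle : I ^ (s + 1) ≤ (I ⊔ Ideal.span {f}) ^ s :=
    (Ideal.pow_le_pow_right s.le_succ).trans (Ideal.pow_right_mono le_sup_left s)
  rw [sup_span_singleton_pow_succ_smul_top, comap_sup_map,
    (isSMulRegular_on_quot_iff_lsmul_comap_eq _ _).mp hf, sup_eq_right]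
  exact smul_mono_left hle

lemma sup_span_singleton_pow_succ_smul_top_sup_range (I : Ideal R) (f : R) (s : ℕ) :
    (I ⊔ Ideal.span {f}) ^ (s + 1) • (⊤ : Submodule R M) ⊔ range (lsmul R M f) =
      I ^ (s + 1) • ⊤ ⊔ range (lsmul R M f) := by
  rw [sup_span_singleton_pow_succ_smul_top, sup_assoc,
    sup_eq_right.mpr (map_le_range (f := lsmul R M f))]

variable [Small.{v} R] {N : ModuleCat.{v} R}

lemma extVanishesBelow_quotient_pow_zero (K : Ideal R) {n : ℕ} :
    ExtVanishesBelow N (ModuleCat.of R (M ⧸ K ^ 0 • (⊤ : Submodule R M))) n := by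
  have : Subsingleton (M ⧸ K ^ 0 • (⊤ : Submodule R M)) := by
    simp only [pow_zero, one_smul, Submodule.Quotient.subsingleton_iff]
  exact .of_isZero (ModuleCat.isZero_of_subsingleton _)

lemma extVanishesBelow_quotient_sup_pow_succ_iff (hfN : f ∈ Module.annihilator R N)
    (hreg : IsSMulRegular (M ⧸ I ^ (s + 1) • (⊤ : Submodule R M)) f)
    (hJI : ∀ n, ExtVanishesBelow N
        (ModuleCat.of R (M ⧸ (I ⊔ Ideal.span {f}) ^ s • (⊤ : Submodule R M))) n →
      ExtVanishesBelow N (ModuleCat.of R (M ⧸ I ^ s • (⊤ : Submodule R M))) (n + 1)) {n : ℕ} :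
    ExtVanishesBelow N
        (ModuleCat.of R (M ⧸ (I ⊔ Ideal.span {f}) ^ (s + 1) • (⊤ : Submodule R M))) n ↔
      ExtVanishesBelow N
        (ModuleCat.of R (M ⧸ (I ⊔ Ideal.span {f}) ^ s • (⊤ : Submodule R M))) n ∧
      ExtVanishesBelow N (ModuleCat.of R (M ⧸ I ^ (s + 1) • (⊤ : Submodule R M))) (n + 1) := by
  have hI := (isSMulRegular_on_quot_iff_lsmul_comap_eq _ _).mp hreg
  have hJ := comap_lsmul_sup_span_singleton_pow_succ_smul_top hreg
  have hC := sup_span_singleton_pow_succ_smul_top_sup_range (M := M) I f s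
  have hIJ (t : ℕ) : I ^ t • (⊤ : Submodule R M) ≤ (I ⊔ Ideal.span {f}) ^ t • ⊤ :=
    smul_mono_left (Ideal.pow_right_mono le_sup_left t)
  let φ := quotientMulComplexMap hI rfl hJ hC (hIJ (s + 1))
  have : IsIso φ.τ₃ := inferInstanceAs (IsIso (𝟙 _))
  rw [extVanishesBelow_quotient_succ_iff hfN hI rfl]
  refine ExtVanishesBelow.X₂_iff_of_factors (quotientMulComplex_shortExact hI rfl)
    (quotientMulComplex_shortExact hJ hC) φ
    (a := ModuleCat.ofHom (factor (smul_mono_left (Ideal.pow_le_pow_right s.le_succ))))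
    (b := ModuleCat.ofHom (factor (hIJ s))) ?_ hJI
  rw [← ModuleCat.ofHom_comp, factor_comp]
  rfl

theorem extVanishesBelow_quotient_sup_pow_iff (hfN : f ∈ Module.annihilator R N)
    (hreg : ∀ t ≤ s, IsSMulRegular (M ⧸ I ^ t • (⊤ : Submodule R M)) f) {n : ℕ} :
    ExtVanishesBelow N (ModuleCat.of R (M ⧸ (I ⊔ Ideal.span {f}) ^ s • (⊤ : Submodule R M))) n ↔
      ∀ t ≤ s, ExtVanishesBelow N (ModuleCat.of R (M ⧸ I ^ t • (⊤ : Submodule R M))) (n + 1) := by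
  induction s generalizing n with
  | zero =>
    simp only [nonpos_iff_eq_zero, forall_eq, extVanishesBelow_quotient_pow_zero]
  | succ s ih =>
    replace ih {n : ℕ} := ih (n := n) fun t ht ↦ hreg t (ht.trans s.le_succ)
    rw [extVanishesBelow_quotient_sup_pow_succ_iff hfN (hreg _ le_rfl)
      fun _ h ↦ ih.mp h s le_rfl, ih]
    simp only [Nat.le_succ_iff, or_imp, forall_and, forall_eq]

end PowerFiltration

section Depth

variable {R : Type u} [CommRing R] {M : Type v} [AddCommGroup M] [Module R M] (J : Ideal R)

lemma idealDepth_congr {M' : Type*} [AddCommGroup M'] [Module R M'] (e : M ≃ₗ[R] M') :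
    idealDepth J M = idealDepth J M' := by
  simp only [idealDepth, e.isRegular_congr]

lemma idealDepth_eq_zero_of_subsingleton [Subsingleton M] : idealDepth J M = 0 := by
  have hempty : {d : ℕ | ∃ rs : List R, rs.length = d ∧ (∀ r ∈ rs, r ∈ J) ∧
      RingTheory.Sequence.IsRegular M rs} = ∅ :=
    Set.eq_empty_of_forall_notMem fun _ ⟨_, _, _, hrs⟩ ↦
      not_nontrivial M hrs.nontrivial
  rw [idealDepth, hempty, csSup_empty, Nat.bot_eq_zero]

lemma idealDepth_quotient_pow_smul_top_eq_zero {I : Ideal R}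
    (hI : I • (⊤ : Submodule R M) = ⊤) (t : ℕ) :
    idealDepth J (M ⧸ I ^ t • (⊤ : Submodule R M)) = 0 := by
  have hpow : I ^ t • (⊤ : Submodule R M) = ⊤ := by
    induction t with
    | zero => rw [pow_zero, one_smul]
    | succ t ih => rw [pow_succ, Submodule.mul_smul, hI, ih]
  have := Submodule.Quotient.subsingleton_iff.mpr hpow
  exact idealDepth_eq_zero_of_subsingleton J

variable {J}

lemma smul_top_quotient_eq_top_iff (K : Submodule R M) :
    J • (⊤ : Submodule R (M ⧸ K)) = ⊤ ↔ J • ⊤ ⊔ K = ⊤ := by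
  rw [← (Submodule.comap_injective_of_surjective K.mkQ_surjective).eq_iff,
    Submodule.comap_smul_top_of_surjective J _ K.mkQ_surjective, Submodule.ker_mkQ,
    Submodule.comap_top]

open Submodule LinearMap

variable [Small.{v} R] [IsNoetherianRing R]

lemma exists_isRegular_iff_extVanishesBelow [Module.Finite R M]
    (hJ : J • (⊤ : Submodule R M) ≠ ⊤) {n : ℕ} :
    (∃ rs : List R, rs.length = n ∧ (∀ r ∈ rs, r ∈ J) ∧ RingTheory.Sequence.IsRegular M rs) ↔
      ExtVanishesBelow (ModuleCat.of R (Shrink.{v} (R ⧸ J))) (ModuleCat.of R M) n :=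
  (ModuleCat.exists_isRegular_tfae J n (ModuleCat.of R M) hJ.lt_top).out 3 1

lemma exists_not_extVanishesBelow_quotient [Module.Finite R M] {K : Submodule R M}
    (hK : J • ⊤ ⊔ K ≠ ⊤) :
    ∃ n, ¬ ExtVanishesBelow (ModuleCat.of R (Shrink.{v} (R ⧸ J))) (ModuleCat.of R (M ⧸ K)) n := by
  induction K using WellFoundedGT.induction with
  | ind K ih =>
    by_contra! hExt
    obtain ⟨rs, hlen, hrsJ, hrs⟩ := (exists_isRegular_iff_extVanishesBelow
      ((smul_top_quotient_eq_top_iff K).not.mpr hK)).mpr (hExt 1)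
    obtain ⟨x, rfl⟩ := List.length_eq_one_iff.mp hlen
    have hxJ : x ∈ J := hrsJ x (List.mem_singleton_self x)
    have hcomap : K.comap (lsmul R M x) = K :=
      (isSMulRegular_on_quot_iff_lsmul_comap_eq _ _).mp
        ((RingTheory.Sequence.isWeaklyRegular_singleton_iff _ _).mp hrs.toIsWeaklyRegular)
    have hrange : range (lsmul R M x) ≤ J • ⊤ := by
      rintro _ ⟨m, rfl⟩
      exact smul_mem_smul hxJ mem_top
    have hlt : K < K ⊔ range (lsmul R M x) := by
      refine left_lt_sup.mpr fun hle ↦ hK ?_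
      rw [hcomap.symm.trans (range_le_iff_comap.mp hle), sup_top_eq]
    obtain ⟨n, hn⟩ := ih _ hlt (by
      rwa [sup_comm K, ← sup_assoc, sup_eq_left.mpr hrange])
    exact hn (.X₃ (quotientMulComplex_shortExact hcomap rfl) (hExt n) (hExt (n + 1)))

lemma exists_not_extVanishesBelow [Module.Finite R M] (hJ : J • (⊤ : Submodule R M) ≠ ⊤) :
    ∃ n, ¬ ExtVanishesBelow (ModuleCat.of R (Shrink.{v} (R ⧸ J))) (ModuleCat.of R M) n := by
  have hbot : J • ⊤ ⊔ (⊥ : Submodule R M) ≠ ⊤ := by rwa [sup_bot_eq]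
  obtain ⟨n, hn⟩ := exists_not_extVanishesBelow_quotient hbot
  exact ⟨n, fun h ↦ hn (h.of_iso (quotEquivOfEqBot ⊥ rfl).symm.toModuleIso)⟩

theorem le_idealDepth_iff [Module.Finite R M] (hJ : J • (⊤ : Submodule R M) ≠ ⊤) {n : ℕ} :
    n ≤ idealDepth J M ↔
      ExtVanishesBelow (ModuleCat.of R (Shrink.{v} (R ⧸ J))) (ModuleCat.of R M) n := by
  simp only [idealDepth, exists_isRegular_iff_extVanishesBelow hJ]
  obtain ⟨b, hb⟩ := exists_not_extVanishesBelow hJ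
  have hbdd : BddAbove {d | ExtVanishesBelow (ModuleCat.of R (Shrink.{v} (R ⧸ J)))
      (ModuleCat.of R M) d} :=
    ⟨b, fun d hd ↦ le_of_not_ge fun hbd ↦ hb (hd.mono hbd)⟩
  exact ⟨fun h ↦ (Nat.sSup_mem ⟨0, .zero⟩ hbdd).mono h, fun h ↦ le_csSup hbdd h⟩

end Depth

section Powers

variable {R : Type u} [CommRing R] {M : Type v} [AddCommGroup M] [Module R M]
  {I 𝔪 : Ideal R} {f : R} {s : ℕ}

lemma mem_annihilator_shrink_quotient [Small.{v} R] (hf : f ∈ 𝔪) :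
    f ∈ Module.annihilator R (Shrink.{v} (R ⧸ 𝔪)) := by
  rwa [(Shrink.linearEquiv R (R ⧸ 𝔪)).annihilator_eq, Ideal.annihilator_quotient]

lemma smul_top_quotient_smul_top_ne_top {K L : Ideal R} (hKL : K ≤ L)
    (hL : (L ⊔ 𝔪) • (⊤ : Submodule R M) ≠ ⊤) :
    𝔪 • (⊤ : Submodule R (M ⧸ K • (⊤ : Submodule R M))) ≠ ⊤ := by
  rw [Ne, smul_top_quotient_eq_top_iff, ← Submodule.sup_smul, sup_comm]
  exact ne_top_of_le_ne_top hL (Submodule.smul_mono_left (sup_le_sup_right hKL 𝔪))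

variable [IsNoetherianRing R] [Small.{v} R] [Module.Finite R M]

theorem le_idealDepth_quotient_sup_pow_iff (hI : (I ⊔ 𝔪) • (⊤ : Submodule R M) ≠ ⊤)
    (hf : f ∈ 𝔪) (hs : 1 ≤ s)
    (hreg : ∀ t ≤ s, IsSMulRegular (M ⧸ I ^ t • (⊤ : Submodule R M)) f) {n : ℕ} :
    n ≤ idealDepth 𝔪 (M ⧸ (I ⊔ Ideal.span {f}) ^ s • (⊤ : Submodule R M)) ↔
      ∀ t, 1 ≤ t → t ≤ s → n + 1 ≤ idealDepth 𝔪 (M ⧸ I ^ t • (⊤ : Submodule R M)) := by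
  have hfI : (I ⊔ Ideal.span {f} ⊔ 𝔪) • (⊤ : Submodule R M) ≠ ⊤ := by
    rwa [sup_assoc, sup_eq_right.mpr ((Ideal.span_singleton_le_iff_mem 𝔪).mpr hf)]
  rw [le_idealDepth_iff (smul_top_quotient_smul_top_ne_top (Ideal.pow_le_self (by lia)) hfI),
    extVanishesBelow_quotient_sup_pow_iff (mem_annihilator_shrink_quotient hf) hreg]
  refine forall_congr' fun t ↦ ?_
  obtain rfl | ht := t.eq_zero_or_pos
  · simp [extVanishesBelow_quotient_pow_zero]
  · rw [le_idealDepth_iff (smul_top_quotient_smul_top_ne_top (Ideal.pow_le_self ht.ne') hI)]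
    exact ⟨fun h _ ↦ h, fun h ↦ h ht⟩

theorem depth_powers_modulo_nonzerodivisor_general
    (hI : (I ⊔ 𝔪) • (⊤ : Submodule R M) = ⊤ → I • (⊤ : Submodule R M) = ⊤) (hf : f ∈ 𝔪)
    (hs : 1 ≤ s) (hreg : ∀ t ≤ s, IsSMulRegular (M ⧸ I ^ t • (⊤ : Submodule R M)) f) :
    idealDepth 𝔪 (M ⧸ (I + Ideal.span {f}) ^ s • (⊤ : Submodule R M)) =
      sInf {e : ℕ | ∃ t : ℕ, 1 ≤ t ∧ t ≤ s ∧
        e = idealDepth 𝔪 (M ⧸ I ^ t • (⊤ : Submodule R M))} - 1 := by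
  set S := {e : ℕ | ∃ t : ℕ, 1 ≤ t ∧ t ≤ s ∧
    e = idealDepth 𝔪 (M ⧸ I ^ t • (⊤ : Submodule R M))}
  rw [Submodule.add_eq_sup]
  by_cases hItop : I • (⊤ : Submodule R M) = ⊤
  · have hJtop : (I ⊔ Ideal.span {f}) • (⊤ : Submodule R M) = ⊤ :=
      top_le_iff.mp (hItop.ge.trans (Submodule.smul_mono_left le_sup_left))
    have hS : sInf S ≤ 0 :=
      Nat.sInf_le ⟨1, le_rfl, hs, (idealDepth_quotient_pow_smul_top_eq_zero 𝔪 hItop 1).symm⟩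
    rw [idealDepth_quotient_pow_smul_top_eq_zero 𝔪 hJtop, Nat.le_zero.mp hS]
  · have hle {n : ℕ} :
        n ≤ idealDepth 𝔪 (M ⧸ (I ⊔ Ideal.span {f}) ^ s • (⊤ : Submodule R M)) ↔
          n + 1 ≤ sInf S := by
      rw [le_idealDepth_quotient_sup_pow_iff (fun h ↦ hItop (hI h)) hf hs hreg,
        le_csInf_iff (OrderBot.bddBelow S) ⟨_, 1, le_rfl, hs, rfl⟩]
      exact ⟨fun h _ ⟨t, ht, hts, he⟩ ↦ he ▸ h t ht hts, fun h t ht hts ↦ h _ ⟨t, ht, hts, rfl⟩⟩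
    have hpos : 0 + 1 ≤ sInf S := hle.mp (Nat.zero_le _)
    exact eq_of_forall_le_iff fun n ↦ hle.trans (by lia)

end Powers

lemma eq_top_of_sup_irrelevant_eq_top {ι σ A : Type*} [Semiring A] [AddCommMonoid ι]
    [PartialOrder ι] [CanonicallyOrderedAdd ι] [DecidableEq ι] [SetLike σ A]
    [AddSubmonoidClass σ A] (𝒜 : ι → σ) [GradedRing 𝒜] {I : Ideal A} (hI : I.IsHomogeneous 𝒜)
    (h : I ⊔ (HomogeneousIdeal.irrelevant 𝒜).toIdeal = ⊤) : I = ⊤ := by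
  obtain ⟨a, ha, b, hb, hab⟩ := Submodule.mem_sup.mp ((Ideal.eq_top_iff_one _).mp h)
  have hb₀ : GradedRing.proj 𝒜 0 b = 0 := hb
  have ha₀ : GradedRing.proj 𝒜 0 a = 1 := by
    rw [← add_zero (GradedRing.proj 𝒜 0 a), ← hb₀, ← map_add, hab, GradedRing.proj_apply,
      DirectSum.decompose_of_mem_same 𝒜 SetLike.GradedOne.one_mem]
  exact (Ideal.eq_top_iff_one I).mpr (ha₀ ▸ hI 0 ha)

/-- **Theorem (depth of powers modulo a non-zerodivisor).** Let `R` be a positively graded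
Noetherian algebra over a field `k` (graded by `𝒜` with `𝒜 0 = k·1`), let `I` be a graded
ideal of `R`, and let `f ≠ 0` be a form (of some positive degree) which is a
non-zerodivisor on `R/I^t` for all `t ≤ s`. Then, with `𝔪` the maximal homogeneous
(irrelevant) ideal, `depth R/(I,f)^s = min_{1 ≤ t ≤ s} depth R/I^t - 1`. -/
theorem depth_powers_modulo_nonzerodivisor {k R : Type*} [Field k] [CommRing R]
    [IsNoetherianRing R] [Algebra k R] (𝒜 : ℕ → Submodule k R) [GradedAlgebra 𝒜]
    (h0 : 𝒜 0 = Submodule.span k {(1 : R)})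
    (I : Ideal R) (hI : Ideal.IsHomogeneous 𝒜 I)
    (f : R) (hf0 : f ≠ 0) (d : ℕ) (hd : 0 < d) (hfd : f ∈ 𝒜 d)
    (s : ℕ) (hs : 1 ≤ s)
    (hnzd : ∀ t : ℕ, t ≤ s → ∀ g : R, f * g ∈ I ^ t → g ∈ I ^ t) :
    idealDepth (HomogeneousIdeal.irrelevant 𝒜).toIdeal (R ⧸ (I + Ideal.span {f}) ^ s)
      = sInf {e : ℕ | ∃ t : ℕ, 1 ≤ t ∧ t ≤ s ∧
          e = idealDepth (HomogeneousIdeal.irrelevant 𝒜).toIdeal (R ⧸ I ^ t)} - 1 := by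
  set 𝔪 := (HomogeneousIdeal.irrelevant 𝒜).toIdeal
  have hquot (K : Ideal R) : idealDepth 𝔪 (R ⧸ K • (⊤ : Ideal R)) = idealDepth 𝔪 (R ⧸ K) :=
    idealDepth_congr 𝔪 (Submodule.quotEquivOfEq _ _ (Ideal.mul_top K))
  have hreg (t : ℕ) (ht : t ≤ s) : IsSMulRegular (R ⧸ I ^ t • (⊤ : Ideal R)) f := by
    rw [smul_eq_mul, Ideal.mul_top, isSMulRegular_quotient_iff_mem_of_smul_mem]
    exact hnzd t ht
  have hI_top : (I ⊔ 𝔪) • (⊤ : Ideal R) = ⊤ → I • (⊤ : Ideal R) = ⊤ := by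
    simpa only [smul_eq_mul, Ideal.mul_top] using eq_top_of_sup_irrelevant_eq_top 𝒜 hI
  have hf𝔪 : f ∈ 𝔪 := HomogeneousIdeal.mem_irrelevant_of_mem 𝒜 hd hfd
  simpa only [hquot] using depth_powers_modulo_nonzerodivisor_general hI_top hf𝔪 hs hreg
end
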